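/- Let R be a Noetherian ring, 𝔞 an ideal with dim R/𝔞 = 1, and M an R-module. If Ext^i_R(R/𝔞, M) is weakly Laskerian for all i ≤ cd(𝔞, M) + 1, then H^i_𝔞(M) is 𝔞-weakly cofinite for all i ≥ 0, and Ext^i_R(R/𝔞, M) is weakly Laskerian for all i ≥ 0. -/

import Mathlib

open CategoryTheory

universe u

variable (R : Type u) [CommRing R]

/-- The `i`-th Ext module `Ext^i_R(N, M)` of `R`-modules. -/
noncomputable def extModule (i : ℕ) (N M : ModuleCat.{u} R) : ModuleCat.{u} R :=
  ((Ext R (ModuleCat.{u} R) i).obj (Opposite.op N)).obj M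

/-- A module is weakly Laskerian if every quotient has finitely many associated primes. -/
def IsWeaklyLaskerian (M : Type u) [AddCommGroup M] [Module R M] : Prop :=
  ∀ N : Submodule R M, (associatedPrimes R (M ⧸ N)).Finite

/-- `M` is `𝔞`-cofinite: `Supp M ⊆ V(𝔞)` and all `Ext^i_R(R/𝔞, M)` are finitely generated. -/
def IsCofinite (𝔞 : Ideal R) (M : ModuleCat.{u} R) : Prop :=
  Module.support R M ⊆ PrimeSpectrum.zeroLocus (𝔞 : Set R) ∧
    ∀ i : ℕ, Module.Finite R (extModule R i (ModuleCat.of R (R ⧸ 𝔞)) M)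

/-- `M` is `𝔞`-weakly cofinite: `Supp M ⊆ V(𝔞)` and all `Ext^i_R(R/𝔞, M)` are weakly
Laskerian. -/
def IsWeaklyCofinite (𝔞 : Ideal R) (M : ModuleCat.{u} R) : Prop :=
  Module.support R M ⊆ PrimeSpectrum.zeroLocus (𝔞 : Set R) ∧
    ∀ i : ℕ, IsWeaklyLaskerian R (extModule R i (ModuleCat.of R (R ⧸ 𝔞)) M)

/-- The Krull dimension of the support of a module. -/
noncomputable def suppDim (M : Type u) [AddCommGroup M] [Module R M] : WithBot ℕ∞ :=
  Order.krullDim (Module.support R M)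

/-- The cohomological dimension `cd(𝔞, M) = sup {i | H^i_𝔞(M) ≠ 0}`, as an element of `ℕ∞`. -/
noncomputable def cohomologicalDim (𝔞 : Ideal R) (M : ModuleCat.{u} R) : ℕ∞ :=
  ⨆ i ∈ {i : ℕ | Nontrivial ((localCohomology 𝔞 i).obj M)}, (i : ℕ∞)

/-- `p` is an attached prime of `M`: `p` is prime and is the annihilator of a quotient
of `M`. -/
def IsAttachedPrime (M : Type u) [AddCommGroup M] [Module R M] (p : Ideal R) : Prop :=
  p.IsPrime ∧ ∃ N : Submodule R M, p = Module.annihilator R (M ⧸ N)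

/-!
Dividing out the `𝔞`-torsion submodule `Γ(M)` and embedding the quotient into an injective module
without `𝔞`-torsion gives a module `N` with `H^i(N) ≅ H^{i+1}(M)` and
`Ext^i(R/𝔞, N) ≅ Ext^{i+1}(R/𝔞, M/Γ(M))`. By induction on `i` it is therefore enough to treat an
`𝔞`-torsion module `T` for which `Ext^0(R/𝔞, T)` and `Ext^1(R/𝔞, T)` are weakly Laskerian, and to
show that all `Ext^j(R/𝔞, T)` are.

Let `S` be the complement of the union of the minimal primes of `𝔞` that are contained in infinitely
many primes. If `p` is such a minimal prime, then an infinite direct sum of copies of `R/p` has a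
quotient with infinitely many associated primes. Hence localizing at `S` turns weakly Laskerian
modules killed by `𝔞` into finite ones, and `T` into an Artinian module, so some `x ∈ 𝔞` that does
not kill `T` makes `S⁻¹(T/xT)` finite. Then `T/xT` is an extension of a module with finite support
by a finite one, hence weakly Laskerian, and Noetherian induction on the annihilator reduces `T` to
the kernel of multiplication by `x`.
-/

variable {R}

namespace IsWeaklyLaskerian

variable {A B C : Type u} [AddCommGroup A] [Module R A] [AddCommGroup B] [Module R B]
  [AddCommGroup C] [Module R C]

lemma associatedPrimes_finite (h : IsWeaklyLaskerian R A) : (associatedPrimes R A).Finite := by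
  rw [← LinearEquiv.AssociatedPrimes.eq (Submodule.quotEquivOfEqBot ⊥ rfl)]
  exact h ⊥

lemma of_surjective (f : A →ₗ[R] B) (hf : Function.Surjective f) (h : IsWeaklyLaskerian R A) :
    IsWeaklyLaskerian R B := by
  intro N
  have hs : Function.Surjective (N.mkQ ∘ₗ f) := (Submodule.mkQ_surjective N).comp hf
  rw [← LinearEquiv.AssociatedPrimes.eq ((N.mkQ ∘ₗ f).quotKerEquivOfSurjective hs)]
  exact h _

lemma of_injective (f : A →ₗ[R] B) (hf : Function.Injective f) (h : IsWeaklyLaskerian R B) :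
    IsWeaklyLaskerian R A := by
  intro N
  refine (h (N.map f)).subset (associatedPrimes.subset_of_injective
    (f := N.mapQ (N.map f) f (Submodule.le_comap_map f N)) ?_)
  rw [← LinearMap.ker_eq_bot, Submodule.mapQ, Submodule.ker_liftQ_eq_bot]
  rw [LinearMap.ker_comp, Submodule.ker_mkQ, Submodule.comap_map_eq_of_injective hf]

lemma of_linearEquiv (e : A ≃ₗ[R] B) (h : IsWeaklyLaskerian R A) : IsWeaklyLaskerian R B :=
  h.of_surjective e.toLinearMap e.surjective

lemma of_submodule_of_quotient (K : Submodule R B) (hK : IsWeaklyLaskerian R K)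
    (hQ : IsWeaklyLaskerian R (B ⧸ K)) : IsWeaklyLaskerian R B := by
  intro N
  let K' : Submodule R (B ⧸ N) := K.map N.mkQ
  have hK' : IsWeaklyLaskerian R K' :=
    hK.of_surjective (N.mkQ.submoduleMap K) (N.mkQ.submoduleMap_surjective K)
  have hQ' : IsWeaklyLaskerian R ((B ⧸ N) ⧸ K') := by
    refine hQ.of_surjective (K.mapQ K' N.mkQ (Submodule.le_comap_map _ _)) ?_
    refine Function.Surjective.of_comp (g := K.mkQ) ?_
    exact (Submodule.mkQ_surjective K').comp (Submodule.mkQ_surjective N)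
  exact (hK'.associatedPrimes_finite.union hQ'.associatedPrimes_finite).subset
    (associatedPrimes.subset_union_of_exact (Submodule.subtype_injective _)
      (LinearMap.exact_subtype_mkQ K'))

lemma of_exact {f : A →ₗ[R] B} {g : B →ₗ[R] C} (hfg : Function.Exact f g)
    (hA : IsWeaklyLaskerian R A) (hC : IsWeaklyLaskerian R C) : IsWeaklyLaskerian R B := by
  have hker : IsWeaklyLaskerian R (LinearMap.ker g) := by
    rw [hfg.linearMap_ker_eq]
    exact hA.of_surjective f.rangeRestrict f.surjective_rangeRestrict
  have hquot : IsWeaklyLaskerian R (B ⧸ LinearMap.ker g) :=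
    (hC.of_injective _ (Submodule.subtype_injective _)).of_linearEquiv g.quotKerEquivRange.symm
  exact hker.of_submodule_of_quotient _ hquot

lemma of_finite [IsNoetherianRing R] [Module.Finite R A] : IsWeaklyLaskerian R A :=
  fun N => associatedPrimes.finite R (A ⧸ N)

lemma of_subsingleton [Subsingleton A] : IsWeaklyLaskerian R A := fun N => by
  have : Subsingleton (A ⧸ N) := (Submodule.mkQ_surjective N).subsingleton
  rw [associatedPrimes.eq_empty_of_subsingleton]
  exact Set.finite_empty

lemma of_finite_support [IsNoetherianRing R] (h : (Module.support R A).Finite) :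
    IsWeaklyLaskerian R A := fun N => by
  refine (h.image PrimeSpectrum.asIdeal).subset fun p hp => ⟨⟨p, hp.1⟩, ?_, rfl⟩
  refine Module.support_subset_of_surjective N.mkQ (Submodule.mkQ_surjective N) ?_
  obtain ⟨x, hx⟩ := (isAssociatedPrime_iff.1 hp).2
  rw [Module.mem_support_iff_exists_annihilator]
  refine ⟨x, fun r hr => ?_⟩
  simpa [hx, Submodule.mem_annihilator_span_singleton] using hr

lemma pi_fin (h : IsWeaklyLaskerian R A) (n : ℕ) : IsWeaklyLaskerian R (Fin n → A) := by
  induction n with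
  | zero => exact of_subsingleton
  | succ n ih =>
    have hprod : IsWeaklyLaskerian R (A × (Fin n → A)) := of_exact Function.Exact.inl_snd h ih
    exact hprod.of_linearEquiv (Fin.consLinearEquiv R fun _ => A)

end IsWeaklyLaskerian

section ExtComparison

open Limits Opposite

section

variable {A B C : Type*} [AddCommGroup A] [Module R A] [AddCommGroup B] [Module R B]
  [AddCommGroup C] [Module R C]

/-- The isomorphism between the targets of two surjective linear maps with the same kernel. -/
noncomputable def linearEquivOfKerEq (f : A →ₗ[R] B) (g : A →ₗ[R] C) (hf : Function.Surjective f)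
    (hg : Function.Surjective g) (h : LinearMap.ker f = LinearMap.ker g) : B ≃ₗ[R] C :=
  (f.quotKerEquivOfSurjective hf).symm ≪≫ₗ Submodule.quotEquivOfEq _ _ h ≪≫ₗ
    g.quotKerEquivOfSurjective hg

lemma linearEquivOfKerEq_apply (f : A →ₗ[R] B) (g : A →ₗ[R] C) (hf : Function.Surjective f)
    (hg : Function.Surjective g) (h : LinearMap.ker f = LinearMap.ker g) (a : A) :
    linearEquivOfKerEq f g hf hg h (f a) = g a := by
  have hmk : (f.quotKerEquivOfSurjective hf).symm (f a) = Submodule.Quotient.mk a := by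
    rw [LinearEquiv.symm_apply_eq]
    rfl
  simp only [linearEquivOfKerEq, LinearEquiv.trans_apply, hmk]
  rfl

end

variable {X X' : ModuleCat.{u} R} (P : ProjectiveResolution X) (P' : ProjectiveResolution X')
  (Y : ModuleCat.{u} R) (n : ℕ)

/-- The cochain complex `Hom(P, Y)`, encoded as a chain complex in the opposite category because
`extModule` is a left derived functor with values in that category. -/
noncomputable abbrev homComplex : ChainComplex (ModuleCat.{u} R)ᵒᵖ ℕ :=
  (((linearYoneda R (ModuleCat.{u} R)).obj Y).rightOp.mapHomologicalComplex _).obj P.complex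

/-- The module of `n`-cocycles of `Hom(P, Y)`. -/
noncomputable abbrev homCocycles : ModuleCat.{u} R := unop ((homComplex P Y).opcycles n)

/-- The inclusion of the `n`-cocycles into `Hom(Pₙ, Y)`. -/
noncomputable def homCocyclesι : homCocycles P Y n →ₗ[R] (P.complex.X n ⟶ Y) :=
  ((homComplex P Y).pOpcycles n).unop.hom

/-- The isomorphism in the opposite category of `extModule R n X Y`, in the form of a left derived
functor, with the cohomology of `Hom(P, Y)`. -/
noncomputable def extModuleIsoHomology :
    (((linearYoneda R (ModuleCat.{u} R)).obj Y).rightOp.leftDerived n).obj X ≅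
      (homComplex P Y).homology n :=
  P.isoLeftDerivedObj ((linearYoneda R (ModuleCat.{u} R)).obj Y).rightOp n

/-- The class of an `n`-cocycle of `Hom(P, Y)` in `extModule`. -/
noncomputable def homCocyclesToExtModule : homCocycles P Y n ⟶ extModule R n X Y :=
  ((extModuleIsoHomology P Y n).hom ≫ (homComplex P Y).homologyι n).unop

variable {n}

lemma homCocyclesι_injective : Function.Injective (homCocyclesι P Y n) :=
  (ModuleCat.mono_iff_injective _).1
    (inferInstance : Mono ((homComplex P Y).pOpcycles n).unop)

lemma homCocyclesToExtModule_surjective :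
    Function.Surjective (homCocyclesToExtModule P Y n) := by
  have : Mono ((extModuleIsoHomology P Y n).hom ≫ (homComplex P Y).homologyι n) := mono_comp _ _
  exact (ModuleCat.epi_iff_surjective _).1 (unop_epi_of_mono _)

lemma d_comp_homCocyclesι (z : homCocycles P Y n) (m : ℕ) :
    P.complex.d m n ≫ homCocyclesι P Y n z = 0 :=
  congrArg (fun f => f.unop.hom z) ((homComplex P Y).d_pOpcycles m n)

lemma exists_homCocyclesι_eq (f : P.complex.X n ⟶ Y) (hf : P.complex.d (n + 1) n ≫ f = 0) :
    ∃ z, homCocyclesι P Y n z = f := by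
  have hexact : (ShortComplex.mk ((homComplex P Y).d (n + 1) n) ((homComplex P Y).pOpcycles n)
      ((homComplex P Y).d_pOpcycles _ _)).Exact :=
    ShortComplex.exact_of_g_is_cokernel _
      ((homComplex P Y).opcyclesIsCokernel (n + 1) n (ChainComplex.prev ℕ n))
  exact (ShortComplex.moduleCat_exact_iff _).1 hexact.unop f hf

lemma homCocyclesToExtModule_eq_zero_iff_homologyι (z : homCocycles P Y n) :
    homCocyclesToExtModule P Y n z = 0 ↔ ((homComplex P Y).homologyι n).unop.hom z = 0 :=
  (injective_iff_map_eq_zero' _).1 ((ModuleCat.mono_iff_injective _).1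
    (inferInstance : Mono (extModuleIsoHomology P Y n).hom.unop)) _

lemma homCocyclesToExtModule_succ_eq_zero_iff (z : homCocycles P Y (n + 1)) :
    homCocyclesToExtModule P Y (n + 1) z = 0 ↔
      ∃ g : P.complex.X n ⟶ Y, P.complex.d (n + 1) n ≫ g = homCocyclesι P Y (n + 1) z := by
  have hexact : (ShortComplex.mk ((homComplex P Y).homologyι (n + 1))
      ((homComplex P Y).fromOpcycles (n + 1) n)
      ((homComplex P Y).homologyι_comp_fromOpcycles _ _)).Exact :=
    ShortComplex.exact_of_f_is_kernel _
      ((homComplex P Y).homologyIsKernel (n + 1) n (ChainComplex.next_nat_succ n))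
  have hd (g : P.complex.X n ⟶ Y) : homCocyclesι P Y (n + 1)
      (((homComplex P Y).fromOpcycles (n + 1) n).unop.hom g) = P.complex.d (n + 1) n ≫ g :=
    congrArg (fun f => f.unop.hom g) ((homComplex P Y).p_fromOpcycles (n + 1) n)
  rw [homCocyclesToExtModule_eq_zero_iff_homologyι]
  constructor
  · intro hz
    obtain ⟨g, hg⟩ := (ShortComplex.moduleCat_exact_iff _).1 hexact.unop z hz
    exact ⟨g, (hd g).symm.trans (congrArg (homCocyclesι P Y (n + 1)) hg)⟩
  · rintro ⟨g, hg⟩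
    rw [← hd] at hg
    rw [← homCocyclesι_injective P Y hg]
    exact congrArg (fun f => f.unop.hom g)
      ((homComplex P Y).homologyι_comp_fromOpcycles (n + 1) n)

lemma homCocyclesToExtModule_zero_eq_zero_iff (z : homCocycles P Y 0) :
    homCocyclesToExtModule P Y 0 z = 0 ↔ homCocyclesι P Y 0 z = 0 := by
  have : IsIso ((homComplex P Y).homologyι 0) :=
    (homComplex P Y).isIso_homologyι 0 0 (by simp) (by simp)
  rw [homCocyclesToExtModule_eq_zero_iff_homologyι,
    (injective_iff_map_eq_zero' _).1 (homCocyclesι_injective P Y)]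
  exact (injective_iff_map_eq_zero' _).1 ((ModuleCat.mono_iff_injective _).1
    (inferInstance : Mono ((homComplex P Y).homologyι 0).unop)) z

lemma homCocyclesToExtModule_naturality {g : X' ⟶ X} (φ : ProjectiveResolution.Hom P' P g)
    (z : homCocycles P Y n) :
    ∃ z' : homCocycles P' Y n, homCocyclesι P' Y n z' = φ.hom.f n ≫ homCocyclesι P Y n z ∧
      homCocyclesToExtModule P' Y n z' = (((Ext R (ModuleCat.{u} R) n).map g.op).app Y).hom
        (homCocyclesToExtModule P Y n z) := by
  let F := ((linearYoneda R (ModuleCat.{u} R)).obj Y).rightOp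
  let ψ : homComplex P' Y ⟶ homComplex P Y := (F.mapHomologicalComplex _).map φ.hom
  refine ⟨(HomologicalComplex.opcyclesMap ψ n).unop.hom z,
    congrArg (fun f => f.unop.hom z) (HomologicalComplex.p_opcyclesMap ψ n), ?_⟩
  have hiso : (F.leftDerived n).map g ≫ (extModuleIsoHomology P Y n).hom =
      (extModuleIsoHomology P' Y n).hom ≫ HomologicalComplex.homologyMap ψ n :=
    ProjectiveResolution.isoLeftDerivedObj_hom_naturality g P' P φ.hom
      (by simpa using φ.hom_f_zero_comp_π_f_zero) F n
  have hclass : (F.leftDerived n).map g ≫ (extModuleIsoHomology P Y n).hom ≫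
        (homComplex P Y).homologyι n =
      ((extModuleIsoHomology P' Y n).hom ≫ (homComplex P' Y).homologyι n) ≫
        HomologicalComplex.opcyclesMap ψ n := by
    rw [← Category.assoc, hiso, Category.assoc, Category.assoc,
      HomologicalComplex.homologyι_naturality ψ n]
  exact (congrArg (fun f => f.unop.hom z) hclass).symm

variable {Y}

lemma extMk_zero_eq_zero_iff (f : P.complex.X 0 ⟶ Y) (hf : P.complex.d 1 0 ≫ f = 0) :
    (P.extMk f 1 rfl hf : Abelian.Ext.{u} X Y 0) = 0 ↔ f = 0 := by
  refine ⟨fun h => ?_, by rintro rfl; exact P.extMk_zero _ _⟩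
  simp only [← P.extEquivCohomologyClass.apply_eq_iff_eq,
    ProjectiveResolution.extEquivCohomologyClass_extMk,
    ProjectiveResolution.extEquivCohomologyClass_zero,
    CochainComplex.HomComplex.CohomologyClass.mk_eq_zero_iff] at h
  rw [CochainComplex.HomComplex.Cocycle.toSingleMk_mem_coboundaries_iff _ _ _ _ _ 1 (by simp)] at h
  obtain ⟨g, hg⟩ := h
  have hX₁ : IsZero (P.cochainComplex.X 1) :=
    P.cochainComplex.isZero_of_isStrictlyLE 0 1 zero_lt_one
  rw [hX₁.eq_of_src g 0, comp_zero] at hg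
  rw [← cancel_epi (P.cochainComplexXIso (-(0 : ℕ)) 0 rfl).hom, comp_zero]
  exact hg.symm

lemma smul_extMk (r : R) (f : P.complex.X n ⟶ Y) (m : ℕ) (hm : n + 1 = m)
    (hf : P.complex.d m n ≫ f = 0) :
    (P.extMk (r • f) m hm (by simp [hf]) : Abelian.Ext.{u} X Y n) = r • P.extMk f m hm hf := by
  rw [Abelian.Ext.smul_eq_comp_mk₀, ProjectiveResolution.extMk_comp_mk₀]
  simp

variable (Y n)

/-- The class of an `n`-cocycle of `Hom(P, Y)` in `Abelian.Ext`. -/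
noncomputable def homCocyclesToExt : homCocycles P Y n →ₗ[R] Abelian.Ext.{u} X Y n where
  toFun z := P.extMk (homCocyclesι P Y n z) (n + 1) rfl (d_comp_homCocyclesι P Y z _)
  map_add' a b := by
    rw [ProjectiveResolution.add_extMk]
    congr 1
    exact map_add _ a b
  map_smul' r a := by
    rw [RingHom.id_apply, ← smul_extMk]
    congr 1
    exact map_smul _ r a

lemma homCocyclesToExt_surjective : Function.Surjective (homCocyclesToExt P Y n) := by
  intro α
  obtain ⟨f, hf, rfl⟩ := P.extMk_surjective α (n + 1) rfl
  obtain ⟨z, rfl⟩ := exists_homCocyclesι_eq P Y f hf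
  exact ⟨z, rfl⟩

lemma ker_homCocyclesToExtModule : LinearMap.ker (homCocyclesToExtModule P Y n).hom =
    LinearMap.ker (homCocyclesToExt P Y n) := by
  ext z
  cases n with
  | zero =>
    exact (homCocyclesToExtModule_zero_eq_zero_iff P Y z).trans
      (extMk_zero_eq_zero_iff P _ (d_comp_homCocyclesι P Y z 1)).symm
  | succ n =>
    exact (homCocyclesToExtModule_succ_eq_zero_iff P Y z).trans
      (P.extMk_eq_zero_iff _ _ rfl (d_comp_homCocyclesι P Y z _) n rfl).symm

variable (X)

/-- The comparison of `extModule`, which is computed by a projective resolution, with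
`CategoryTheory.Abelian.Ext`. -/
noncomputable def extModuleEquiv : extModule R n X Y ≃ₗ[R] Abelian.Ext.{u} X Y n :=
  linearEquivOfKerEq (homCocyclesToExtModule (projectiveResolution X) Y n).hom
    (homCocyclesToExt (projectiveResolution X) Y n) (homCocyclesToExtModule_surjective _ Y)
    (homCocyclesToExt_surjective _ Y n) (ker_homCocyclesToExtModule _ Y n)

lemma extModuleEquiv_apply (z : homCocycles (projectiveResolution X) Y n) :
    extModuleEquiv X Y n (homCocyclesToExtModule _ Y n z) = homCocyclesToExt _ Y n z :=
  linearEquivOfKerEq_apply _ _ _ _ _ z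

variable {X}

lemma extModuleEquiv_naturality (g : X' ⟶ X) (e : extModule R n X Y) :
    extModuleEquiv X' Y n ((((Ext R (ModuleCat.{u} R) n).map g.op).app Y).hom e) =
      (Abelian.Ext.mk₀ g).comp (extModuleEquiv X Y n e) (zero_add _) := by
  obtain ⟨z, rfl⟩ := homCocyclesToExtModule_surjective (projectiveResolution X) Y e
  let φ : ProjectiveResolution.Hom (projectiveResolution X') (projectiveResolution X) g :=
    ⟨ProjectiveResolution.lift g _ _, by
      simpa using ProjectiveResolution.lift_commutes_zero g (projectiveResolution X')
        (projectiveResolution X)⟩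
  obtain ⟨z', hz', hclass⟩ :=
    homCocyclesToExtModule_naturality (projectiveResolution X) (projectiveResolution X') Y φ z
  rw [← hclass]
  rw [extModuleEquiv_apply, extModuleEquiv_apply]
  refine Eq.trans ?_ (ProjectiveResolution.mk₀_comp_extMk (homCocyclesι _ Y n z) (n + 1) rfl
    (d_comp_homCocyclesι _ Y z _) φ).symm
  change ProjectiveResolution.extMk _ _ _ rfl (d_comp_homCocyclesι _ Y z' _) = _
  congr 1

end ExtComparison

section ExtGroup

variable (R)

/-- The group `Ext^j_R(N, A)` of unbundled modules, in the form of `CategoryTheory.Abelian.Ext`. -/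
abbrev ExtGroup (N A : Type u) [AddCommGroup N] [Module R N] [AddCommGroup A] [Module R A]
    (j : ℕ) : Type u :=
  Abelian.Ext.{u} (ModuleCat.of R N) (ModuleCat.of R A) j

variable {R}

namespace ExtGroup

open Abelian

variable (N : Type u) {N' A B C : Type u} [AddCommGroup N] [Module R N] [AddCommGroup N']
  [Module R N'] [AddCommGroup A] [Module R A] [AddCommGroup B] [Module R B] [AddCommGroup C]
  [Module R C]

/-- The covariant functoriality of `Ext`. -/
noncomputable def map (f : A →ₗ[R] B) (j : ℕ) : ExtGroup R N A j →ₗ[R] ExtGroup R N B j :=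
  (Ext.mk₀ (ModuleCat.ofHom f)).postcompOfLinear R (ModuleCat.of R N) (add_zero j)

lemma map_comp (f : A →ₗ[R] B) (g : B →ₗ[R] C) (j : ℕ) (e : ExtGroup R N A j) :
    map N (g ∘ₗ f) j e = map N g j (map N f j e) := by
  change e.comp (Ext.mk₀ (ModuleCat.ofHom f ≫ ModuleCat.ofHom g)) (add_zero j) =
    (e.comp (Ext.mk₀ _) (add_zero j)).comp (Ext.mk₀ _) (add_zero j)
  simp

lemma map_id (j : ℕ) (e : ExtGroup R N A j) : map N LinearMap.id j e = e :=
  Ext.comp_mk₀_id e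

lemma map_smul_id (x : R) (j : ℕ) (e : ExtGroup R N A j) :
    map N (x • LinearMap.id) j e = x • e :=
  (Ext.smul_eq_comp_mk₀ e x).symm

variable {N} in
lemma smul_eq_zero {x : R} (hx : x ∈ Module.annihilator R N) {j : ℕ} (e : ExtGroup R N A j) :
    x • e = 0 := by
  have hzero : x • 𝟙 (ModuleCat.of R N) = 0 := by
    ext n
    exact Module.mem_annihilator.1 hx n
  have he : x • e = (Ext.mk₀ (x • 𝟙 (ModuleCat.of R N))).comp e (zero_add j) := by
    simp [Ext.mk₀_smul]
  rw [he, hzero, Ext.mk₀_zero, Ext.zero_comp]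

/-- The isomorphism of `Ext` groups induced by an isomorphism of the second arguments. -/
noncomputable def mapEquiv (φ : A ≃ₗ[R] B) (j : ℕ) : ExtGroup R N A j ≃ₗ[R] ExtGroup R N B j :=
  LinearEquiv.ofLinearMap (map N φ.toLinearMap j) (map N φ.symm.toLinearMap j)
    (by ext e; rw [LinearMap.comp_apply, ← map_comp, LinearEquiv.comp_symm, map_id]; rfl)
    (by ext e; rw [LinearMap.comp_apply, ← map_comp, LinearEquiv.symm_comp, map_id]; rfl)

lemma subsingleton_of_injective [Module.Injective R A] (j : ℕ) :
    Subsingleton (ExtGroup R N A (j + 1)) :=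
  have : Injective (ModuleCat.of R A) := Module.injective_object_of_injective_module R A
  Ext.subsingleton_of_injective _ _ _

section LongExactSequence

variable {f : A →ₗ[R] B} {g : B →ₗ[R] C} (hf : Function.Injective f) (hfg : Function.Exact f g)
  (hg : Function.Surjective g) (j : ℕ)

/-- The connecting map of the covariant long exact sequence of `Ext`. -/
noncomputable def δ : ExtGroup R N C j →ₗ[R] ExtGroup R N A (j + 1) :=
  (ModuleCat.shortComplex_shortExact
    (ModuleCat.shortComplexOfCompEqZero f g hfg.linearMap_comp_eq_zero)
    hfg hf hg).extClass.postcompOfLinear R (ModuleCat.of R N) rfl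

include hf hfg hg in
lemma exact_map_map : Function.Exact (map N f j) (map N g j) :=
  (ShortComplex.ab_exact_iff_function_exact _).1
    (Ext.covariant_sequence_exact₂' (ModuleCat.of R N) (ModuleCat.shortComplex_shortExact
      (ModuleCat.shortComplexOfCompEqZero f g hfg.linearMap_comp_eq_zero) hfg hf hg) j)

lemma exact_map_δ : Function.Exact (map N g j) (δ N hf hfg hg j) :=
  (ShortComplex.ab_exact_iff_function_exact _).1
    (Ext.covariant_sequence_exact₃' (ModuleCat.of R N) (ModuleCat.shortComplex_shortExact
      (ModuleCat.shortComplexOfCompEqZero f g hfg.linearMap_comp_eq_zero) hfg hf hg) j _ rfl)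

lemma exact_δ_map : Function.Exact (δ N hf hfg hg j) (map N f (j + 1)) :=
  (ShortComplex.ab_exact_iff_function_exact _).1
    (Ext.covariant_sequence_exact₁' (ModuleCat.of R N) (ModuleCat.shortComplex_shortExact
      (ModuleCat.shortComplexOfCompEqZero f g hfg.linearMap_comp_eq_zero) hfg hf hg) j _ rfl)

variable {j}

include hf hfg hg

lemma isWeaklyLaskerian_middle (hA : IsWeaklyLaskerian R (ExtGroup R N A j))
    (hC : IsWeaklyLaskerian R (ExtGroup R N C j)) : IsWeaklyLaskerian R (ExtGroup R N B j) :=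
  .of_exact (exact_map_map N hf hfg hg j) hA hC

lemma isWeaklyLaskerian_left (hC : IsWeaklyLaskerian R (ExtGroup R N C j))
    (hB : IsWeaklyLaskerian R (ExtGroup R N B (j + 1))) :
    IsWeaklyLaskerian R (ExtGroup R N A (j + 1)) :=
  .of_exact (exact_δ_map N hf hfg hg j) hC hB

lemma isWeaklyLaskerian_right (hB : IsWeaklyLaskerian R (ExtGroup R N B j))
    (hA : IsWeaklyLaskerian R (ExtGroup R N A (j + 1))) :
    IsWeaklyLaskerian R (ExtGroup R N C j) :=
  .of_exact (exact_map_δ N hf hfg hg j) hB hA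

end LongExactSequence

section Restrict

/-- The contravariant functoriality of `Ext`. -/
noncomputable def restrict (r : N' →ₗ[R] N) (A : Type u) [AddCommGroup A] [Module R A] (j : ℕ) :
    ExtGroup R N A j →ₗ[R] ExtGroup R N' A j :=
  (Ext.mk₀ (ModuleCat.ofHom r)).precompOfLinear R (ModuleCat.of R A) (zero_add j)

variable {N} {j : ℕ}

lemma map_restrict (r : N' →ₗ[R] N) (f : A →ₗ[R] B) (e : ExtGroup R N A j) :
    map N' f j (restrict N r A j e) = restrict N r B j (map N f j e) :=
  Ext.comp_assoc_of_third_deg_zero _ e _ (zero_add j)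

lemma δ_restrict (r : N' →ₗ[R] N) {f : A →ₗ[R] B} {g : B →ₗ[R] C} (hf : Function.Injective f)
    (hfg : Function.Exact f g) (hg : Function.Surjective g) (e : ExtGroup R N C j) :
    δ N' hf hfg hg j (restrict N r C j e) = restrict N r A (j + 1) (δ N hf hfg hg j e) :=
  Ext.comp_assoc _ e _ (zero_add j) rfl (by rw [zero_add])

end Restrict

section Zero

/-- A linear map out of `R / I` is determined by the image of `1`, which is an arbitrary element
annihilated by `I`. -/
def homQuotientEquiv (I : Ideal R) (A : Type u) [AddCommGroup A] [Module R A] :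
    ((R ⧸ I) →ₗ[R] A) ≃ₗ[R] Submodule.torsionBySet R A (I : Set R) where
  toFun φ := ⟨φ (Submodule.Quotient.mk 1), (Submodule.mem_torsionBySet_iff _ _).2 fun x => by
    rw [← map_smul, ← Submodule.Quotient.mk_smul, smul_eq_mul, mul_one,
      (Submodule.Quotient.mk_eq_zero I).2 x.2, map_zero]⟩
  map_add' _ _ := rfl
  map_smul' _ _ := rfl
  invFun a := I.liftQ (LinearMap.toSpanSingleton R A a)
    fun x hx => (Submodule.mem_torsionBySet_iff _ _).1 a.2 ⟨x, hx⟩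
  left_inv φ := by
    ext
    simp
  right_inv a := Subtype.ext (one_smul R (a : A))

/-- `Ext^0_R(R/I, A)` is the submodule of `A` annihilated by `I`. -/
noncomputable def zeroEquiv (I : Ideal R) (A : Type u) [AddCommGroup A] [Module R A] :
    ExtGroup R (R ⧸ I) A 0 ≃ₗ[R] Submodule.torsionBySet R A (I : Set R) :=
  (Ext.linearEquiv₀ : _ ≃ₗ[R] _) ≪≫ₗ ModuleCat.homLinearEquiv ≪≫ₗ homQuotientEquiv I A

lemma zeroEquiv_restrict {I J : Ideal R} (h : J ≤ I) (e : ExtGroup R (R ⧸ I) A 0) :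
    (zeroEquiv J A (restrict _ (Submodule.factor h) A 0 e) : A) = zeroEquiv I A e := by
  obtain ⟨φ, rfl⟩ := (Ext.linearEquiv₀ (R := R)).symm.surjective e
  have hφ : restrict _ (Submodule.factor h) A 0 ((Ext.linearEquiv₀ (R := R)).symm φ) =
      (Ext.linearEquiv₀ (R := R)).symm (ModuleCat.ofHom (Submodule.factor h) ≫ φ) :=
    Ext.mk₀_comp_mk₀ _ _
  rw [hφ]
  simp only [zeroEquiv, LinearEquiv.trans_apply, LinearEquiv.apply_symm_apply]
  rfl

lemma map_zero_injective {f : A →ₗ[R] B} (hf : Function.Injective f) :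
    Function.Injective (map N f 0) :=
  have : Mono (ModuleCat.ofHom f) := (ModuleCat.mono_iff_injective _).2 hf
  Ext.postcomp_mk₀_injective_of_mono _ _

lemma isWeaklyLaskerian_zero_of_injective {f : A →ₗ[R] B} (hf : Function.Injective f)
    (h : IsWeaklyLaskerian R (ExtGroup R N B 0)) : IsWeaklyLaskerian R (ExtGroup R N A 0) :=
  h.of_injective _ (map_zero_injective N hf)

end Zero

end ExtGroup

end ExtGroup

lemma IsWeaklyLaskerian.linearMap {A : Type u} [AddCommGroup A] [Module R A]
    (hA : IsWeaklyLaskerian R A) (N : Type u) [AddCommGroup N] [Module R N] [Module.Finite R N] :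
    IsWeaklyLaskerian R (N →ₗ[R] A) := by
  obtain ⟨n, p, hp⟩ := Module.Finite.exists_fin' R N
  refine .of_injective (LinearMap.lcomp R A p) (fun φ ψ h => ?_)
    ((hA.pi_fin n).of_linearEquiv ((Pi.basisFun R (Fin n)).constr R))
  exact LinearMap.cancel_right hp |>.1 h

lemma IsWeaklyLaskerian.ext [IsNoetherianRing R] {A : Type u} [AddCommGroup A] [Module R A]
    (hA : IsWeaklyLaskerian R A) (N : Type u) [AddCommGroup N] [Module R N] [Module.Finite R N]
    (j : ℕ) : IsWeaklyLaskerian R (ExtGroup R N A j) := by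
  induction j generalizing N with
  | zero =>
    exact (hA.linearMap N).of_linearEquiv
      (Abelian.Ext.linearEquiv₀.trans ModuleCat.homLinearEquiv : _ ≃ₗ[R] _).symm
  | succ j ih =>
    obtain ⟨P, _, _, _, _, p, hp⟩ := Module.exists_finite_presentation R N
    let hexact := LinearMap.shortExact_shortComplexKer hp
    exact (ih (LinearMap.ker p)).of_surjective
      (hexact.extClass.precompOfLinear R (ModuleCat.of R A) (add_comm 1 j))
      (precomp_extClass_surjective_of_projective_X₂ (ModuleCat.of R A) hexact j)

section Torsion

variable (𝔞 : Ideal R) {A B J : Type u} [AddCommGroup A] [Module R A] [AddCommGroup B] [Module R B]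
  [AddCommGroup J] [Module R J]

variable {𝔞} in
lemma exists_range_le_torsionBySet_pow [Module.Finite R B] {f : B →ₗ[R] A}
    (hf : LinearMap.range f ≤ 𝔞.primaryComponent A) :
    ∃ t : ℕ, LinearMap.range f ≤ Submodule.torsionBySet R A (𝔞 ^ t : Ideal R) := by
  have hfg : (LinearMap.range f).FG := by
    rw [← Submodule.map_top]
    exact Module.Finite.fg_top.map f
  obtain ⟨s, hs⟩ := CompleteLattice.IsCompactElement.exists_finset_of_le_iSup _
    ((Submodule.fg_iff_compact _).1 hfg) _ hf
  exact ⟨s.sup id, hs.trans (iSup₂_le fun t ht =>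
    Submodule.torsionBySet_le_torsionBySet_pow t _ (s.le_sup (f := id) ht) 𝔞)⟩

variable {𝔞} in
-- By Artin–Rees, `𝔞 ^ n ∩ 𝔟 ⊆ 𝔞 ^ t 𝔟` for large `n`.
lemma exists_ker_mkQ_pow_le_ker [IsNoetherianRing R] {𝔟 : Ideal R} {f : 𝔟 →ₗ[R] A}
    (hf : LinearMap.range f ≤ 𝔞.primaryComponent A) :
    ∃ n : ℕ, LinearMap.ker ((𝔞 ^ n).mkQ ∘ₗ 𝔟.subtype) ≤ LinearMap.ker f := by
  obtain ⟨t, ht⟩ := exists_range_le_torsionBySet_pow hf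
  obtain ⟨k, hk⟩ := 𝔞.exists_pow_inf_eq_pow_smul 𝔟
  refine ⟨t + k, fun x hx => ?_⟩
  have hx_pow : (x : R) ∈ 𝔞 ^ (t + k) • (⊤ : Submodule R R) ⊓ 𝔟 := by
    simpa [Ideal.Quotient.eq_zero_iff_mem] using hx
  rw [hk _ (Nat.le_add_left k t), Nat.add_sub_cancel] at hx_pow
  have hx_smul : x ∈ 𝔞 ^ t • (⊤ : Submodule R 𝔟) :=
    (Submodule.mem_smul_top_iff _ _ _).2 (Submodule.smul_mono le_rfl inf_le_right hx_pow)
  refine Submodule.smul_le (P := LinearMap.ker f) |>.2 (fun a ha y _ => ?_) hx_smul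
  rw [LinearMap.mem_ker, map_smul]
  exact (Submodule.mem_torsionBySet_iff _ _).1 (ht ⟨y, rfl⟩) ⟨a, ha⟩

lemma exists_comp_eq_of_ker_le [Module.Injective R J] {f : A →ₗ[R] B} {g : A →ₗ[R] J}
    (h : LinearMap.ker f ≤ LinearMap.ker g) : ∃ φ : B →ₗ[R] J, φ ∘ₗ f = g := by
  obtain ⟨φ, hφ⟩ := Module.Injective.extension_property R J _ _
    ((LinearMap.ker f).liftQ f le_rfl)
    (LinearMap.ker_eq_bot.1 (Submodule.ker_liftQ_eq_bot _ _ _ le_rfl))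
    ((LinearMap.ker f).liftQ g h)
  exact ⟨φ, LinearMap.ext fun a => LinearMap.congr_fun hφ (Submodule.Quotient.mk a)⟩

instance injective_primaryComponent [IsNoetherianRing R] [Module.Injective R J] :
    Module.Injective R (𝔞.primaryComponent J) := by
  refine Module.Baer.injective fun 𝔟 f => ?_
  obtain ⟨n, hn⟩ := exists_ker_mkQ_pow_le_ker (f := Submodule.subtype _ ∘ₗ f)
    ((LinearMap.range_comp_le_range _ _).trans (Submodule.range_subtype _).le)
  obtain ⟨φ, hφ⟩ := exists_comp_eq_of_ker_le hn
  let c := ExtGroup.homQuotientEquiv (𝔞 ^ n) J φ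
  have hc : (c : J) ∈ 𝔞.primaryComponent J := (Ideal.primaryComponent_mem _ _ _).2 ⟨n, c.2⟩
  refine ⟨LinearMap.toSpanSingleton R _ ⟨c, hc⟩, fun x hx => Subtype.ext ?_⟩
  calc x • φ (Submodule.Quotient.mk 1) = φ (Submodule.Quotient.mk x) := by
        rw [← map_smul, ← Submodule.Quotient.mk_smul, smul_eq_mul, mul_one]
    _ = f ⟨x, hx⟩ := LinearMap.congr_fun hφ ⟨x, hx⟩

lemma mem_primaryComponent_of_injective {f : A →ₗ[R] B} (hf : Function.Injective f) {a : A} :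
    f a ∈ 𝔞.primaryComponent B ↔ a ∈ 𝔞.primaryComponent A := by
  simp only [Ideal.primaryComponent_mem, Submodule.mem_torsionBySet_iff, ← map_smul,
    map_eq_zero_iff f hf]

variable {𝔞} in
lemma primaryComponent_eq_top_of_surjective {f : A →ₗ[R] B} (hf : Function.Surjective f)
    (hA : 𝔞.primaryComponent A = ⊤) : 𝔞.primaryComponent B = ⊤ := by
  refine eq_top_iff.2 fun b _ => ?_
  obtain ⟨a, rfl⟩ := hf b
  exact Ideal.primaryComponent_map_mem 𝔞 f ⟨a, hA ▸ Submodule.mem_top⟩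

variable {𝔞} in
lemma primaryComponent_eq_top_of_injective {f : A →ₗ[R] B} (hf : Function.Injective f)
    (hB : 𝔞.primaryComponent B = ⊤) : 𝔞.primaryComponent A = ⊤ :=
  eq_top_iff.2 fun _ _ => (mem_primaryComponent_of_injective 𝔞 hf).1 (hB ▸ Submodule.mem_top)

lemma primaryComponent_primaryComponent :
    𝔞.primaryComponent (𝔞.primaryComponent A) = ⊤ :=
  eq_top_iff.2 fun x _ =>
    (mem_primaryComponent_of_injective 𝔞 (Submodule.subtype_injective _)).1 x.2

lemma injective_of_isCompl [Module.Injective R J] {p q : Submodule R J} (h : IsCompl p q) :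
    Module.Injective R p := by
  have : Injective (ModuleCat.of R J) := Module.injective_object_of_injective_module R J
  have : Injective (ModuleCat.of R p) := Retract.injective (Y := ModuleCat.of R J)
    { i := ModuleCat.ofHom p.subtype
      r := ModuleCat.ofHom (p.projectionOnto q h)
      retract := by ext x; simp }
  exact Module.injective_module_of_injective_object R p

lemma exists_isCompl_primaryComponent [IsNoetherianRing R] [Module.Injective R J] :
    ∃ E : Submodule R J, IsCompl (𝔞.primaryComponent J) E := by
  obtain ⟨r, hr⟩ := Module.Injective.extension_property R (𝔞.primaryComponent J) _ _
    (𝔞.primaryComponent J).subtype (Submodule.subtype_injective _) LinearMap.id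
  exact ⟨LinearMap.ker r, LinearMap.isCompl_of_proj (LinearMap.congr_fun hr)⟩

variable (R A) in
lemma exists_injective_embedding : ∃ (E : Type u) (_ : AddCommGroup E) (_ : Module R E)
    (f : A →ₗ[R] E), Module.Injective R E ∧ Function.Injective f := by
  let P : InjectivePresentation (ModuleCat.of R A) := (EnoughInjectives.presentation _).some
  have hP : Injective (ModuleCat.of R P.J) := P.injective
  exact ⟨P.J, inferInstance, inferInstance, P.f.hom,
    Module.injective_module_of_injective_object R P.J, (ModuleCat.mono_iff_injective P.f).1 P.mono⟩

variable {𝔞} in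
lemma exists_injective_embedding_of_primaryComponent_eq_top [IsNoetherianRing R]
    (hA : 𝔞.primaryComponent A = ⊤) :
    ∃ (J : Type u) (_ : AddCommGroup J) (_ : Module R J) (f : A →ₗ[R] J),
      Module.Injective R J ∧ 𝔞.primaryComponent J = ⊤ ∧ Function.Injective f := by
  obtain ⟨E, _, _, f, _, hf⟩ := exists_injective_embedding R A
  have hmem (a : A) : f a ∈ 𝔞.primaryComponent E :=
    (mem_primaryComponent_of_injective 𝔞 hf).2 (hA ▸ Submodule.mem_top)
  exact ⟨𝔞.primaryComponent E, inferInstance, inferInstance, f.codRestrict _ hmem, inferInstance,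
    primaryComponent_primaryComponent 𝔞, (LinearMap.injective_codRestrict_iff _).2 hf⟩

variable (A) in
lemma exists_injective_embedding_quotient_primaryComponent [IsNoetherianRing R] :
    ∃ (E : Type u) (_ : AddCommGroup E) (_ : Module R E) (f : A ⧸ 𝔞.primaryComponent A →ₗ[R] E),
      Module.Injective R E ∧ 𝔞.primaryComponent E = ⊥ ∧ Function.Injective f := by
  obtain ⟨J, _, _, f, _, hf⟩ := exists_injective_embedding R A
  obtain ⟨E, hE⟩ := exists_isCompl_primaryComponent 𝔞 (J := J)
  let g := E.projectionOnto _ hE.symm ∘ₗ f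
  have hker : LinearMap.ker g = 𝔞.primaryComponent A := by
    ext a
    rw [LinearMap.ker_comp, Submodule.ker_projectionOnto]
    exact mem_primaryComponent_of_injective 𝔞 hf
  refine ⟨E, inferInstance, inferInstance, (𝔞.primaryComponent A).liftQ g hker.ge,
    injective_of_isCompl hE.symm, eq_bot_iff.2 fun x hx => ?_, ?_⟩
  · refine (Submodule.mem_bot R).2 (Subtype.ext (Submodule.disjoint_def.1 hE.disjoint x ?_ x.2))
    exact (mem_primaryComponent_of_injective 𝔞 E.subtype_injective).2 hx
  · exact LinearMap.ker_eq_bot.1 (Submodule.ker_liftQ_eq_bot' _ _ hker.symm)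

end Torsion

section LocalExt

lemma bijective_of_exact_of_subsingleton {A B C D : Type*} [AddCommGroup A] [Module R A]
    [AddCommGroup B] [Module R B] [AddCommGroup C] [Module R C] [AddCommGroup D] [Module R D]
    [Subsingleton A] [Subsingleton D] {f : A →ₗ[R] B} {g : B →ₗ[R] C} {h : C →ₗ[R] D}
    (hfg : Function.Exact f g) (hgh : Function.Exact g h) : Function.Bijective g := by
  refine ⟨(injective_iff_map_eq_zero g).2 fun b hb => ?_,
    fun c => (hgh c).1 (Subsingleton.elim _ _)⟩
  obtain ⟨a, rfl⟩ := (hfg b).1 hb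
  rw [Subsingleton.elim a 0, map_zero]

lemma exact_directLimit_map {ι : Type*} [DecidableEq ι] [Preorder ι] [Nonempty ι]
    [IsDirectedOrder ι] {F G H : ι → Type*} [∀ i, AddCommGroup (F i)] [∀ i, Module R (F i)]
    [∀ i, AddCommGroup (G i)] [∀ i, Module R (G i)] [∀ i, AddCommGroup (H i)] [∀ i, Module R (H i)]
    {f : ∀ i j, i ≤ j → F i →ₗ[R] F j} {g : ∀ i j, i ≤ j → G i →ₗ[R] G j}
    {h : ∀ i j, i ≤ j → H i →ₗ[R] H j} [DirectedSystem H (h · · ·)]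
    {φ : ∀ i, F i →ₗ[R] G i} {ψ : ∀ i, G i →ₗ[R] H i}
    (hφ : ∀ i j hij, φ j ∘ₗ f i j hij = g i j hij ∘ₗ φ i)
    (hψ : ∀ i j hij, ψ j ∘ₗ g i j hij = h i j hij ∘ₗ ψ i)
    (hexact : ∀ i, Function.Exact (φ i) (ψ i)) :
    Function.Exact (Module.DirectLimit.map φ hφ) (Module.DirectLimit.map ψ hψ) := by
  intro z
  constructor
  · intro hz
    obtain ⟨i, y, rfl⟩ := Module.DirectLimit.exists_of z
    rw [Module.DirectLimit.map_apply_of] at hz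
    obtain ⟨j, hij, hy⟩ := Module.DirectLimit.of.zero_exact hz
    obtain ⟨x, hx⟩ := (hexact j (g i j hij y)).1 ((LinearMap.congr_fun (hψ i j hij) y).trans hy)
    refine ⟨Module.DirectLimit.of R ι F f j x, ?_⟩
    rw [Module.DirectLimit.map_apply_of, hx, Module.DirectLimit.of_f]
  · rintro ⟨w, rfl⟩
    obtain ⟨i, x, rfl⟩ := Module.DirectLimit.exists_of w
    rw [Module.DirectLimit.map_apply_of, Module.DirectLimit.map_apply_of,
      (hexact i).apply_apply_eq_zero, map_zero]

namespace ExtGroup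

open Abelian

variable {N N' N'' A B C : Type u} [AddCommGroup N] [Module R N] [AddCommGroup N'] [Module R N']
  [AddCommGroup N''] [Module R N''] [AddCommGroup A] [Module R A] [AddCommGroup B] [Module R B]
  [AddCommGroup C] [Module R C] {j : ℕ}

lemma restrict_restrict (r : N' →ₗ[R] N) (r' : N'' →ₗ[R] N') (e : ExtGroup R N A j) :
    restrict N' r' A j (restrict N r A j e) = restrict N (r ∘ₗ r') A j e := by
  change (Ext.mk₀ _).comp ((Ext.mk₀ _).comp e (zero_add j)) (zero_add j) =
    (Ext.mk₀ (ModuleCat.ofHom r' ≫ ModuleCat.ofHom r)).comp e (zero_add j)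
  simp

lemma restrict_id (e : ExtGroup R N A j) : restrict N LinearMap.id A j e = e :=
  Ext.mk₀_id_comp e

lemma zeroEquiv_map (I : Ideal R) (f : A →ₗ[R] B) (e : ExtGroup R (R ⧸ I) A 0) :
    (zeroEquiv I B (map _ f 0 e) : B) = f (zeroEquiv I A e) := by
  obtain ⟨φ, rfl⟩ := (Ext.linearEquiv₀ (R := R)).symm.surjective e
  have hφ : map _ f 0 ((Ext.linearEquiv₀ (R := R)).symm φ) =
      (Ext.linearEquiv₀ (R := R)).symm (φ ≫ ModuleCat.ofHom f) :=
    Ext.mk₀_comp_mk₀ _ _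
  rw [hφ]
  simp only [zeroEquiv, LinearEquiv.trans_apply, LinearEquiv.apply_symm_apply]
  rfl

variable (N) in
/-- The connecting map of `Ext` as an isomorphism, when `Ext(N, B)` vanishes in the two relevant
degrees. -/
noncomputable def δEquiv {f : A →ₗ[R] B} {g : B →ₗ[R] C} (hf : Function.Injective f)
    (hfg : Function.Exact f g) (hg : Function.Surjective g) (j : ℕ)
    [Subsingleton (ExtGroup R N B j)] [Subsingleton (ExtGroup R N B (j + 1))] :
    ExtGroup R N C j ≃ₗ[R] ExtGroup R N A (j + 1) :=
  LinearEquiv.ofBijective (δ N hf hfg hg j)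
    (bijective_of_exact_of_subsingleton (exact_map_δ N hf hfg hg j) (exact_δ_map N hf hfg hg j))

variable (𝔞 : Ideal R)

/-- The transition map `Ext^j(R/𝔞^t, A) → Ext^j(R/𝔞^s, A)`. -/
noncomputable def restrictPow {t s : ℕ} (h : t ≤ s) (A : Type u) [AddCommGroup A] [Module R A]
    (j : ℕ) : ExtGroup R (R ⧸ 𝔞 ^ t) A j →ₗ[R] ExtGroup R (R ⧸ 𝔞 ^ s) A j :=
  restrict _ (Submodule.factor (Ideal.pow_le_pow_right h)) A j

instance directedSystem_restrictPow (A : Type u) [AddCommGroup A] [Module R A] (j : ℕ) :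
    DirectedSystem (fun t : ℕ => ExtGroup R (R ⧸ 𝔞 ^ t) A j)
      fun _ _ h => restrictPow 𝔞 h A j where
  map_self t e := by
    refine Eq.trans (congrArg (fun r => restrict _ r A j e) ?_) (restrict_id e)
    ext
    rfl
  map_map _ _ _ h h' e := by
    refine (restrict_restrict _ _ e).trans (congrArg (fun r => restrict _ r A j e) ?_)
    ext
    rfl

end ExtGroup

/-- The direct limit of the modules `Ext^j(R/𝔞^t, A)`, the elementary form of the local cohomology
module `H^j_𝔞(A)`. -/
abbrev LocalExt (𝔞 : Ideal R) (A : Type u) [AddCommGroup A] [Module R A] (j : ℕ) : Type u :=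
  Module.DirectLimit (fun t : ℕ => ExtGroup R (R ⧸ 𝔞 ^ t) A j)
    fun _ _ h => ExtGroup.restrictPow 𝔞 h A j

namespace LocalExt

variable (𝔞 : Ideal R) {A B C : Type u} [AddCommGroup A] [Module R A] [AddCommGroup B]
  [Module R B] [AddCommGroup C] [Module R C] {j : ℕ}

variable (A j) in
/-- The canonical map from `Ext^j(R/𝔞^t, A)` to the direct limit. -/
noncomputable abbrev of (t : ℕ) : ExtGroup R (R ⧸ 𝔞 ^ t) A j →ₗ[R] LocalExt 𝔞 A j :=
  Module.DirectLimit.of R ℕ (fun t : ℕ => ExtGroup R (R ⧸ 𝔞 ^ t) A j)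
    (fun _ _ h => ExtGroup.restrictPow 𝔞 h A j) t

/-- The functoriality of `LocalExt`. -/
noncomputable def map (f : A →ₗ[R] B) (j : ℕ) : LocalExt 𝔞 A j →ₗ[R] LocalExt 𝔞 B j :=
  Module.DirectLimit.map (fun _ => ExtGroup.map _ f j)
    fun _ _ _ => LinearMap.ext fun _ => ExtGroup.map_restrict _ f _

section ShortExact

variable {f : A →ₗ[R] B} {g : B →ₗ[R] C} (hf : Function.Injective f) (hfg : Function.Exact f g)
  (hg : Function.Surjective g)

include hf hfg hg in
lemma exact_map_map (j : ℕ) : Function.Exact (map 𝔞 f j) (map 𝔞 g j) :=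
  exact_directLimit_map _ _ fun _ => ExtGroup.exact_map_map _ hf hfg hg j

/-- The connecting map of the long exact sequence of `LocalExt`. -/
noncomputable def δ (j : ℕ) : LocalExt 𝔞 C j →ₗ[R] LocalExt 𝔞 A (j + 1) :=
  Module.DirectLimit.map (fun _ => ExtGroup.δ _ hf hfg hg j)
    fun _ _ _ => LinearMap.ext fun _ => ExtGroup.δ_restrict _ hf hfg hg _

lemma exact_map_δ (j : ℕ) : Function.Exact (map 𝔞 g j) (δ 𝔞 hf hfg hg j) :=
  exact_directLimit_map _ _ fun _ => ExtGroup.exact_map_δ _ hf hfg hg j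

lemma exact_δ_map (j : ℕ) : Function.Exact (δ 𝔞 hf hfg hg j) (map 𝔞 f (j + 1)) :=
  exact_directLimit_map _ _ fun _ => ExtGroup.exact_δ_map _ hf hfg hg j

include hf hfg hg in
lemma subsingleton_of_map_surjective [Subsingleton (LocalExt 𝔞 B (j + 1))]
    (h : Function.Surjective (map 𝔞 g j)) : Subsingleton (LocalExt 𝔞 A (j + 1)) := by
  refine subsingleton_of_forall_eq 0 fun z => ?_
  obtain ⟨c, rfl⟩ := (exact_δ_map 𝔞 hf hfg hg j z).1 (Subsingleton.elim _ _)
  obtain ⟨b, rfl⟩ := h c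
  exact (exact_map_δ 𝔞 hf hfg hg j).apply_apply_eq_zero b

end ShortExact

lemma subsingleton_of_forall_subsingleton
    (h : ∀ t : ℕ, Subsingleton (ExtGroup R (R ⧸ 𝔞 ^ t) A j)) : Subsingleton (LocalExt 𝔞 A j) := by
  refine subsingleton_of_forall_eq 0 fun z => ?_
  obtain ⟨t, e, rfl⟩ := Module.DirectLimit.exists_of z
  rw [Subsingleton.elim e 0, map_zero]

variable (A j) in
lemma primaryComponent_eq_top : 𝔞.primaryComponent (LocalExt 𝔞 A j) = ⊤ := by
  refine eq_top_iff.2 fun z _ => ?_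
  obtain ⟨t, e, rfl⟩ := Module.DirectLimit.exists_of z
  refine (Ideal.primaryComponent_mem _ 𝔞 _).2 ⟨t, (Submodule.mem_torsionBySet_iff _ _).2 ?_⟩
  rintro ⟨a, ha⟩
  rw [← map_smul, ExtGroup.smul_eq_zero (by rwa [Ideal.annihilator_quotient]), map_zero]

variable (A) in
/-- The comparison map from `H^0_𝔞(A)` to the `𝔞`-torsion submodule of `A`. -/
noncomputable def toPrimaryComponent : LocalExt 𝔞 A 0 →ₗ[R] 𝔞.primaryComponent A :=
  Module.DirectLimit.lift R ℕ (fun t : ℕ => ExtGroup R (R ⧸ 𝔞 ^ t) A 0)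
    (fun _ _ h => ExtGroup.restrictPow 𝔞 h A 0)
    (fun t => Submodule.inclusion (le_iSup _ t) ∘ₗ (ExtGroup.zeroEquiv (𝔞 ^ t) A).toLinearMap)
    fun _ _ h e => Subtype.ext (ExtGroup.zeroEquiv_restrict (Ideal.pow_le_pow_right h) e)

lemma toPrimaryComponent_of {t : ℕ} (e : ExtGroup R (R ⧸ 𝔞 ^ t) A 0) :
    (toPrimaryComponent 𝔞 A (of 𝔞 A 0 t e) : A) = ExtGroup.zeroEquiv (𝔞 ^ t) A e := by
  rw [toPrimaryComponent, Module.DirectLimit.lift_of]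
  rfl

variable (A) in
lemma toPrimaryComponent_bijective : Function.Bijective (toPrimaryComponent 𝔞 A) := by
  refine ⟨(injective_iff_map_eq_zero _).2 fun z hz => ?_, ?_⟩
  · obtain ⟨t, e, rfl⟩ := Module.DirectLimit.exists_of z
    have he : (ExtGroup.zeroEquiv (𝔞 ^ t) A e : A) = 0 := by
      rw [← toPrimaryComponent_of, hz, Submodule.coe_zero]
    rw [(LinearEquiv.map_eq_zero_iff _).1 (Subtype.ext he), map_zero]
  · rintro ⟨a, ha⟩
    obtain ⟨t, ht⟩ := (Ideal.primaryComponent_mem _ _ _).1 ha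
    refine ⟨of 𝔞 A 0 t ((ExtGroup.zeroEquiv (𝔞 ^ t) A).symm ⟨a, ht⟩), Subtype.ext ?_⟩
    rw [toPrimaryComponent_of, LinearEquiv.apply_symm_apply]

lemma toPrimaryComponent_map (f : A →ₗ[R] B) (z : LocalExt 𝔞 A 0) :
    (toPrimaryComponent 𝔞 B (map 𝔞 f 0 z) : B) = f (toPrimaryComponent 𝔞 A z) := by
  obtain ⟨t, e, rfl⟩ := Module.DirectLimit.exists_of z
  rw [map, Module.DirectLimit.map_apply_of, toPrimaryComponent_of, toPrimaryComponent_of,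
    ExtGroup.zeroEquiv_map]

lemma map_zero_surjective {f : A →ₗ[R] B} (hf : Function.Surjective f)
    (hA : 𝔞.primaryComponent A = ⊤) : Function.Surjective (map 𝔞 f 0) := by
  intro z
  obtain ⟨a, ha⟩ := hf (toPrimaryComponent 𝔞 B z)
  obtain ⟨w, hw⟩ := (toPrimaryComponent_bijective 𝔞 A).2 ⟨a, hA ▸ Submodule.mem_top⟩
  refine ⟨w, (toPrimaryComponent_bijective 𝔞 B).1 (Subtype.ext ?_)⟩
  rw [toPrimaryComponent_map, hw, ha]

lemma subsingleton_of_injective [Module.Injective R A] (j : ℕ) :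
    Subsingleton (LocalExt 𝔞 A (j + 1)) :=
  subsingleton_of_forall_subsingleton 𝔞 fun _ => ExtGroup.subsingleton_of_injective _ j

variable {𝔞} in
-- A torsion module embeds in an injective torsion module; the cokernel is again torsion.
lemma subsingleton_of_primaryComponent_eq_top [IsNoetherianRing R]
    (hA : 𝔞.primaryComponent A = ⊤) (j : ℕ) : Subsingleton (LocalExt 𝔞 A (j + 1)) := by
  induction j generalizing A with
  | zero =>
    obtain ⟨J, _, _, f, _, hJ, hf⟩ := exists_injective_embedding_of_primaryComponent_eq_top hA
    have := subsingleton_of_injective 𝔞 (A := J) 0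
    exact subsingleton_of_map_surjective 𝔞 hf (LinearMap.exact_map_mkQ_range f)
      (LinearMap.range f).mkQ_surjective (map_zero_surjective 𝔞 (Submodule.mkQ_surjective _) hJ)
  | succ j ih =>
    obtain ⟨J, _, _, f, _, hJ, hf⟩ := exists_injective_embedding_of_primaryComponent_eq_top hA
    have := subsingleton_of_injective 𝔞 (A := J) (j + 1)
    have := ih (primaryComponent_eq_top_of_surjective (LinearMap.range f).mkQ_surjective hJ)
    exact subsingleton_of_map_surjective 𝔞 hf (LinearMap.exact_map_mkQ_range f)
      (LinearMap.range f).mkQ_surjective (Function.surjective_to_subsingleton _)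

variable {𝔞} in
/-- `H^{j+1}_𝔞` does not change on dividing out an `𝔞`-torsion submodule. -/
noncomputable def equivOfTorsionKer [IsNoetherianRing R] {f : A →ₗ[R] B} {g : B →ₗ[R] C}
    (hf : Function.Injective f) (hfg : Function.Exact f g) (hg : Function.Surjective g)
    (hA : 𝔞.primaryComponent A = ⊤) (j : ℕ) : LocalExt 𝔞 B (j + 1) ≃ₗ[R] LocalExt 𝔞 C (j + 1) :=
  have := subsingleton_of_primaryComponent_eq_top hA j
  have := subsingleton_of_primaryComponent_eq_top hA (j + 1)
  LinearEquiv.ofBijective (map 𝔞 g (j + 1)) <|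
    bijective_of_exact_of_subsingleton (exact_map_map 𝔞 hf hfg hg (j + 1))
      (exact_map_δ 𝔞 hf hfg hg (j + 1))

/-- The connecting map of `LocalExt` as an isomorphism, when `H^*_𝔞(B)` vanishes in the two
relevant degrees. -/
noncomputable def δEquiv {f : A →ₗ[R] B} {g : B →ₗ[R] C} (hf : Function.Injective f)
    (hfg : Function.Exact f g) (hg : Function.Surjective g) (j : ℕ)
    [Subsingleton (LocalExt 𝔞 B j)] [Subsingleton (LocalExt 𝔞 B (j + 1))] :
    LocalExt 𝔞 C j ≃ₗ[R] LocalExt 𝔞 A (j + 1) :=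
  LinearEquiv.ofBijective (δ 𝔞 hf hfg hg j)
    (bijective_of_exact_of_subsingleton (exact_map_δ 𝔞 hf hfg hg j) (exact_δ_map 𝔞 hf hfg hg j))

end LocalExt
end LocalExt

section LocalCohomology

open Limits Opposite localCohomology

variable (𝔞 : Ideal R) (i : ℕ) (M : ModuleCat.{u} R)

/-- The cocone of the modules `Ext^i(R/𝔞^t, M)` with vertex `H^i_𝔞(M)`. -/
noncomputable def localCohomologyCocone :
    Cocone (diagram (idealPowersDiagram 𝔞) i ⋙ (evaluation _ _).obj M) :=
  ((evaluation _ _).obj M).mapCocone (colimit.cocone (diagram (idealPowersDiagram 𝔞) i))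

/-- The cocone `localCohomologyCocone` is colimiting. -/
noncomputable def isColimitLocalCohomologyCocone :
    IsColimit (localCohomologyCocone 𝔞 i M) :=
  isColimitOfPreserves _ (colimit.isColimit _)

/-- The canonical map `Ext^i(R/𝔞^t, M) → H^i_𝔞(M)`. -/
noncomputable def extToLocalCohomology (t : ℕ) :
    ExtGroup R (R ⧸ 𝔞 ^ t) M i →ₗ[R] (localCohomology 𝔞 i).obj M :=
  ((localCohomologyCocone 𝔞 i M).ι.app (op (op t))).hom ∘ₗ
    (extModuleEquiv (ModuleCat.of R (R ⧸ 𝔞 ^ t)) M i).symm.toLinearMap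

lemma extToLocalCohomology_extModuleEquiv (t : ℕ)
    (e : extModule R i (ModuleCat.of R (R ⧸ 𝔞 ^ t)) M) :
    extToLocalCohomology 𝔞 i M t (extModuleEquiv (ModuleCat.of R (R ⧸ 𝔞 ^ t)) M i e) =
      ((localCohomologyCocone 𝔞 i M).ι.app (op (op t))).hom e :=
  congrArg ((localCohomologyCocone 𝔞 i M).ι.app (op (op t))).hom
    ((extModuleEquiv (ModuleCat.of R (R ⧸ 𝔞 ^ t)) M i).symm_apply_apply e)

lemma extModuleEquiv_diagram_map {t s : ℕ} (h : t ≤ s)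
    (e : extModule R i (ModuleCat.of R (R ⧸ 𝔞 ^ t)) M) :
    extModuleEquiv (ModuleCat.of R (R ⧸ 𝔞 ^ s)) M i
        (((diagram (idealPowersDiagram 𝔞) i ⋙ (evaluation _ _).obj M).map
          (homOfLE h).op.op).hom e) =
      ExtGroup.restrictPow 𝔞 h M i (extModuleEquiv (ModuleCat.of R (R ⧸ 𝔞 ^ t)) M i e) :=
  extModuleEquiv_naturality M i (ModuleCat.ofHom (Submodule.factor (Ideal.pow_le_pow_right h))) e

lemma extToLocalCohomology_restrictPow {t s : ℕ} (h : t ≤ s) (e : ExtGroup R (R ⧸ 𝔞 ^ t) M i) :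
    extToLocalCohomology 𝔞 i M s (ExtGroup.restrictPow 𝔞 h M i e) =
      extToLocalCohomology 𝔞 i M t e := by
  obtain ⟨e, rfl⟩ := (extModuleEquiv (ModuleCat.of R (R ⧸ 𝔞 ^ t)) M i).surjective e
  rw [← extModuleEquiv_diagram_map]
  refine (extToLocalCohomology_extModuleEquiv 𝔞 i M s _).trans
    (Eq.trans ?_ (extToLocalCohomology_extModuleEquiv 𝔞 i M t e).symm)
  exact congrArg (fun f => f.hom e) ((localCohomologyCocone 𝔞 i M).w (homOfLE h).op.op)

lemma preservesFilteredColimits_forget :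
    PreservesFilteredColimitsOfSize.{0, 0} (forget (ModuleCat.{u} R)) :=
  preservesFilteredColimitsOfSize_shrink.{0, u, 0, u} _

lemma exists_extToLocalCohomology_eq (z : (localCohomology 𝔞 i).obj M) :
    ∃ t e, extToLocalCohomology 𝔞 i M t e = z := by
  have := preservesFilteredColimits_forget (R := R)
  obtain ⟨j, e, rfl⟩ := Concrete.isColimit_exists_rep _ (isColimitLocalCohomologyCocone 𝔞 i M) z
  exact ⟨j.unop.unop, _, extToLocalCohomology_extModuleEquiv 𝔞 i M _ e⟩

lemma exists_restrictPow_eq_zero {t : ℕ} {e : ExtGroup R (R ⧸ 𝔞 ^ t) M i}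
    (h : extToLocalCohomology 𝔞 i M t e = 0) :
    ∃ (s : ℕ) (hts : t ≤ s), ExtGroup.restrictPow 𝔞 hts M i e = 0 := by
  have := preservesFilteredColimits_forget (R := R)
  obtain ⟨e, rfl⟩ := (extModuleEquiv (ModuleCat.of R (R ⧸ 𝔞 ^ t)) M i).surjective e
  rw [extToLocalCohomology_extModuleEquiv] at h
  obtain ⟨s, f, g, hfg⟩ := (Concrete.isColimit_rep_eq_iff_exists _
    (isColimitLocalCohomologyCocone 𝔞 i M) (i := op (op t)) (j := op (op t)) e 0).1
      (h.trans (map_zero _).symm)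
  refine ⟨s.unop.unop, f.unop.unop.down.down, ?_⟩
  rw [← extModuleEquiv_diagram_map]
  exact (congrArg _ (hfg.trans (map_zero _))).trans (map_zero _)

/-- The comparison map from the elementary form of local cohomology to the one of Mathlib. -/
noncomputable def localExtToLocalCohomology :
    LocalExt 𝔞 M i →ₗ[R] (localCohomology 𝔞 i).obj M :=
  Module.DirectLimit.lift R ℕ (fun t : ℕ => ExtGroup R (R ⧸ 𝔞 ^ t) M i)
    (fun _ _ h => ExtGroup.restrictPow 𝔞 h M i) (extToLocalCohomology 𝔞 i M)
    fun _ _ h e => extToLocalCohomology_restrictPow 𝔞 i M h e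

lemma localExtToLocalCohomology_of (t : ℕ) (e : ExtGroup R (R ⧸ 𝔞 ^ t) M i) :
    localExtToLocalCohomology 𝔞 i M (LocalExt.of 𝔞 M i t e) = extToLocalCohomology 𝔞 i M t e := by
  rw [localExtToLocalCohomology, Module.DirectLimit.lift_of]

/-- `H^i_𝔞(M)` is the direct limit of the modules `Ext^i(R/𝔞^t, M)`. -/
noncomputable def localExtEquivLocalCohomology :
    LocalExt 𝔞 M i ≃ₗ[R] (localCohomology 𝔞 i).obj M :=
  LinearEquiv.ofBijective (localExtToLocalCohomology 𝔞 i M) <| by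
    refine ⟨(injective_iff_map_eq_zero _).2 fun z hz => ?_, fun z => ?_⟩
    · obtain ⟨t, e, rfl⟩ := Module.DirectLimit.exists_of z
      rw [localExtToLocalCohomology_of] at hz
      obtain ⟨s, hts, he⟩ := exists_restrictPow_eq_zero 𝔞 i M hz
      rw [← Module.DirectLimit.of_f (hij := hts), he, map_zero]
    · obtain ⟨t, e, rfl⟩ := exists_extToLocalCohomology_eq 𝔞 i M z
      exact ⟨LocalExt.of 𝔞 M i t e, localExtToLocalCohomology_of 𝔞 i M t e⟩

end LocalCohomology

section TorsionFreeInjective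

variable {𝔞 : Ideal R} {E : Type u} [AddCommGroup E] [Module R E] [Module.Injective R E]

lemma ExtGroup.subsingleton_of_primaryComponent_eq_bot (hE : 𝔞.primaryComponent E = ⊥) (t j : ℕ) :
    Subsingleton (ExtGroup R (R ⧸ 𝔞 ^ t) E j) := by
  cases j with
  | zero =>
    have htors : Submodule.torsionBySet R E (𝔞 ^ t : Ideal R) = ⊥ :=
      eq_bot_iff.2 ((le_iSup (fun t : ℕ => Submodule.torsionBySet R E (𝔞 ^ t : Ideal R)) t).trans
        hE.le)
    have := Submodule.subsingleton_iff_eq_bot.2 htors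
    exact (ExtGroup.zeroEquiv (𝔞 ^ t) E).toEquiv.subsingleton
  | succ j => exact ExtGroup.subsingleton_of_injective _ j

lemma ExtGroup.subsingleton_quotient_of_primaryComponent_eq_bot (hE : 𝔞.primaryComponent E = ⊥)
    (j : ℕ) : Subsingleton (ExtGroup R (R ⧸ 𝔞) E j) := by
  have := subsingleton_of_primaryComponent_eq_bot hE 1 j
  rwa [pow_one] at this

lemma LocalExt.subsingleton_of_primaryComponent_eq_bot (hE : 𝔞.primaryComponent E = ⊥) (j : ℕ) :
    Subsingleton (LocalExt 𝔞 E j) :=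
  subsingleton_of_forall_subsingleton 𝔞 fun t =>
    ExtGroup.subsingleton_of_primaryComponent_eq_bot hE t j

end TorsionFreeInjective

section ArtinianCriterion

open Submodule

lemma exists_forall_eq_of_antitone {α : Type*} [PartialOrder α] [WellFoundedLT α]
    {f : ℕ → ℕ → α} (hf : ∀ ⦃k l m n⦄, k ≤ l → m ≤ n → f l n ≤ f k m) :
    ∃ n, ∀ m, n ≤ m → ∀ k, f k m = f k n := by
  have hstab (g : ℕ → α) (hg : Antitone g) : ∃ n, ∀ m, n ≤ m → g n = g m :=
    (wellFoundedGT_iff_monotone_chain_condition (α := αᵒᵈ)).1 inferInstance ⟨g, hg⟩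
  obtain ⟨d, hd⟩ := hstab (fun i => f i i) fun _ _ h => hf h h
  choose n hn using fun k => hstab (f k) fun _ _ h => hf le_rfl h
  have hle : d ≤ d + (Finset.range d).sup n := Nat.le_add_right _ _
  refine ⟨d + (Finset.range d).sup n, fun m hm k => ?_⟩
  rcases lt_or_ge k d with hk | hk
  · have hnk : n k ≤ d + (Finset.range d).sup n :=
      (Finset.le_sup (Finset.mem_range.2 hk)).trans (Nat.le_add_left _ _)
    rw [← hn k _ (hnk.trans hm), ← hn k _ hnk]
  · refine le_antisymm (hf le_rfl hm) ?_
    calc f k (d + (Finset.range d).sup n) ≤ f d d := hf hk hle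
      _ = f (max k m) (max k m) := hd _ (hk.trans (le_max_left _ _))
      _ ≤ f k m := hf (le_max_left _ _) (le_max_right _ _)

variable {D : Type*} [AddCommGroup D] [Module R D]

/-- The elements of the form `x ^ k • n`, with `n ∈ N`, that are killed by `x`. -/
def torsionLevel (x : R) (k : ℕ) (N : Submodule R D) : Submodule R (torsionBy R D x) :=
  (N.map (LinearMap.lsmul R D (x ^ k))).comap (torsionBy R D x).subtype

lemma torsionLevel_mono (x : R) {k l : ℕ} (hkl : k ≤ l) {N N' : Submodule R D} (h : N ≤ N') :
    torsionLevel x l N ≤ torsionLevel x k N' := by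
  refine comap_mono ?_
  rintro _ ⟨n, hn, rfl⟩
  refine ⟨x ^ (l - k) • n, h (N.smul_mem _ hn), ?_⟩
  rw [LinearMap.lsmul_apply, LinearMap.lsmul_apply, smul_smul, ← pow_add,
    Nat.add_sub_cancel' hkl]

lemma eq_of_torsionLevel_eq {x : R} (htor : ∀ y : D, ∃ k : ℕ, x ^ k • y = 0)
    {N N' : Submodule R D} (h : N ≤ N') (hlevel : ∀ k, torsionLevel x k N = torsionLevel x k N') :
    N = N' := by
  refine le_antisymm h fun y hy => ?_
  obtain ⟨k, hk⟩ := htor y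
  induction k generalizing y with
  | zero =>
    rw [pow_zero, one_smul] at hk
    exact hk ▸ zero_mem N
  | succ k ih =>
    have hker : x ^ k • y ∈ torsionBy R D x := by
      rw [mem_torsionBy_iff, smul_smul, ← pow_succ', hk]
    have hmem : (⟨x ^ k • y, hker⟩ : torsionBy R D x) ∈ torsionLevel x k N :=
      (hlevel k).symm ▸ ⟨y, hy, rfl⟩
    obtain ⟨n, hn, hny⟩ := hmem
    have hsub : y - n ∈ N := ih (y - n) (sub_mem hy (h hn)) <| by
      rw [smul_sub, sub_eq_zero]
      exact hny.symm
    simpa only [sub_add_cancel] using add_mem hsub hn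

lemma isArtinian_of_isArtinian_torsionBy {x : R} (htor : ∀ y : D, ∃ k : ℕ, x ^ k • y = 0)
    [IsArtinian R (torsionBy R D x)] : IsArtinian R D := by
  refine monotone_stabilizes_iff_artinian.1 fun N => ?_
  obtain ⟨n, hn⟩ := exists_forall_eq_of_antitone
    (f := fun k i => torsionLevel x k (OrderDual.ofDual (N i)))
    fun _ _ _ _ hkl hij => torsionLevel_mono x hkl (N.monotone hij)
  exact ⟨n, fun m hm => congrArg OrderDual.toDual
    (eq_of_torsionLevel_eq htor (N.monotone hm) (hn m hm)).symm⟩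

-- Melkersson's criterion.
lemma isArtinian_of_isArtinian_torsionBySet {s : Finset R}
    (htor : ∀ x ∈ s, ∀ y : D, ∃ k : ℕ, x ^ k • y = 0)
    (hs : IsArtinian R (torsionBySet R D (s : Set R))) : IsArtinian R D := by
  classical
  induction s using Finset.induction_on generalizing D with
  | empty =>
    have htop : torsionBySet R D ((∅ : Finset R) : Set R) = ⊤ :=
      eq_top_iff.2 fun y _ => (mem_torsionBySet_iff _ y).2 fun a => absurd a.2 (by simp)
    rw [htop] at hs
    exact topEquiv.isArtinian_iff.1 hs
  | insert x s _ ih =>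
    have hx := htor x (Finset.mem_insert_self x s)
    suffices IsArtinian R (torsionBy R D x) from isArtinian_of_isArtinian_torsionBy hx
    refine ih (fun z hz y => ?_) ?_
    · obtain ⟨k, hk⟩ := htor z (Finset.mem_insert_of_mem hz) y
      exact ⟨k, Subtype.ext hk⟩
    · have hmem (y : torsionBySet R (torsionBy R D x) (s : Set R)) :
          (y : D) ∈ torsionBySet R D ((insert x s : Finset R) : Set R) := by
        refine (mem_torsionBySet_iff _ _).2 fun ⟨a, ha⟩ => ?_
        rcases Finset.mem_insert.1 (Finset.mem_coe.1 ha) with rfl | ha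
        · exact y.1.2
        · exact congrArg Subtype.val ((mem_torsionBySet_iff _ _).1 y.2 ⟨a, ha⟩)
      refine isArtinian_of_injective
        (((torsionBy R D x).subtype ∘ₗ Submodule.subtype _).codRestrict _ hmem) fun y z hyz => ?_
      exact Subtype.ext (Subtype.ext (congrArg (torsionBySet R D _).subtype hyz))

end ArtinianCriterion

section Secondary

open Submodule Pointwise

variable {D : Type*} [AddCommGroup D] [Module R D] [IsArtinian R D] {E : Submodule R D}

-- Fitting's lemma for multiplication by `x` on `E`.
lemma smul_eq_or_mem_radical_annihilator_of_supIrred (hE : SupIrred E) (x : R) :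
    x • E = E ∨ x ∈ E.annihilator.radical := by
  obtain ⟨n, hn, hn0⟩ := ((LinearMap.lsmul R E x).eventually_codisjoint_ker_pow_range_pow.and
    (Filter.eventually_ge_atTop 1)).exists
  have hpow (e : E) : (LinearMap.lsmul R E x ^ n) e = x ^ n • e := by
    rw [Module.End.pow_apply]
    exact smul_iterate_apply x n e
  have hsup : (LinearMap.ker (LinearMap.lsmul R E x ^ n)).map E.subtype ⊔
      (LinearMap.range (LinearMap.lsmul R E x ^ n)).map E.subtype = E := by
    rw [← Submodule.map_sup, codisjoint_iff.1 hn, map_subtype_top]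
  rcases hE.2 hsup with hker | hrange
  · refine Or.inr ⟨n, mem_annihilator.2 fun e he => ?_⟩
    rw [← hker] at he
    obtain ⟨z, hz, rfl⟩ := he
    exact congrArg Subtype.val ((hpow z).symm.trans hz)
  · refine Or.inl (le_antisymm (smul_le_self_of_tower x E) ?_)
    conv_lhs => rw [← hrange]
    rintro _ ⟨_, ⟨z, rfl⟩, rfl⟩
    refine ⟨x ^ (n - 1) • (z : D), E.smul_mem _ z.2, ?_⟩
    rw [hpow, DistribSMul.toLinearMap_apply, smul_smul, mul_pow_sub_one (by lia)]
    rfl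

lemma isPrime_radical_annihilator_of_supIrred (hE : SupIrred E) :
    E.annihilator.radical.IsPrime where
  ne_top' h := hE.ne_bot (annihilator_eq_top_iff.1 (Ideal.radical_eq_top.1 h))
  mem_or_mem' {x y} hxy := by
    refine (em (x ∈ E.annihilator.radical)).imp_right fun hx => ?_
    have hxE : x • E = E := (smul_eq_or_mem_radical_annihilator_of_supIrred hE x).resolve_right hx
    have hpow (n : ℕ) : x ^ n • E = E := by
      induction n with
      | zero => rw [pow_zero, one_smul]
      | succ n ih => rw [pow_succ, mul_smul, hxE, ih]
    obtain ⟨n, hn⟩ := hxy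
    refine ⟨n, mem_annihilator.2 fun e he => ?_⟩
    rw [← hpow n] at he
    obtain ⟨e', he', rfl⟩ := he
    rw [DistribSMul.toLinearMap_apply, smul_smul, ← mul_pow, mul_comm]
    exact mem_annihilator.1 hn e' he'

lemma exists_pow_smul_le_smul_of_supIrred [IsNoetherianRing R] (hE : SupIrred E) (I : Ideal R)
    {x : R} (hx : ¬ I ≤ E.annihilator.radical → x ∉ E.annihilator.radical) :
    ∃ k : ℕ, I ^ k • E ≤ x • E := by
  by_cases hI : I ≤ E.annihilator.radical
  · obtain ⟨k, hk⟩ := Ideal.exists_pow_le_of_le_radical_of_fg hI (IsNoetherian.noetherian I)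
    refine ⟨k, (smul_mono_left hk).trans ?_⟩
    rw [annihilator_smul]
    exact bot_le
  · refine ⟨0, smul_le_right.trans_eq ?_⟩
    exact ((smul_eq_or_mem_radical_annihilator_of_supIrred hE x).resolve_right (hx hI)).symm

lemma exists_finite_primes_forall_pow_smul_le [IsNoetherianRing R] (D : Type*) [AddCommGroup D]
    [Module R D] [IsArtinian R D] (I : Ideal R) :
    ∃ F : Set (Ideal R), F.Finite ∧ (∀ q ∈ F, q.IsPrime ∧ ¬ I ≤ q) ∧
      ∀ x : R, (∀ q ∈ F, x ∉ q) → ∃ k : ℕ, I ^ k • (⊤ : Submodule R D) ≤ x • ⊤ := by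
  classical
  obtain ⟨s, hs, hirr⟩ := exists_supIrred_decomposition (⊤ : Submodule R D)
  let radAnn (E : Submodule R D) : Ideal R := E.annihilator.radical
  refine ⟨{q ∈ radAnn '' s | ¬ I ≤ q}, (s.finite_toSet.image _).subset (Set.sep_subset _ _),
    ?_, fun x hx => ?_⟩
  · rintro _ ⟨⟨E, hE, rfl⟩, hI⟩
    exact ⟨isPrime_radical_annihilator_of_supIrred (hirr hE), hI⟩
  · have hpow : ∀ E ∈ s, ∃ k : ℕ, I ^ k • E ≤ x • E := fun E hE =>
      exists_pow_smul_le_smul_of_supIrred (hirr hE) I fun hI => hx _ ⟨⟨E, hE, rfl⟩, hI⟩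
    choose! k hk using hpow
    refine ⟨s.sup k, ?_⟩
    calc I ^ s.sup k • (⊤ : Submodule R D) = ⨆ E ∈ s, I ^ s.sup k • E := by
          rw [← hs, Finset.sup_eq_iSup]; simp only [Submodule.smul_iSup, id]
      _ ≤ x • ⊤ := iSup₂_le fun E hE => ((smul_mono_left
          (Ideal.pow_le_pow_right (Finset.le_sup hE))).trans (hk E hE)).trans
          (Submodule.map_mono le_top)

end Secondary

section ArtinianQuotient

variable [IsNoetherianRing R] {I : Ideal R}

lemma isArtinianRing_quotient_of_forall_minimalPrimes_isMaximal
    (h : ∀ p ∈ I.minimalPrimes, p.IsMaximal) : IsArtinianRing (R ⧸ I) :=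
  isArtinianRing_iff_isNoetherianRing_krullDimLE_zero.2 ⟨inferInstance,
    Ideal.krullDimLE_zero_quotient_iff_forall_minimalPrimes_isMaximal.2 h⟩

lemma isNoetherian_iff_isArtinian_of_isTorsionBySet [IsArtinianRing (R ⧸ I)] {D : Type*}
    [AddCommGroup D] [Module R D] (hD : Module.IsTorsionBySet R D I) :
    IsNoetherian R D ↔ IsArtinian R D := by
  let _ := hD.module
  have : IsScalarTower R (R ⧸ I) D := hD.isScalarTower
  have hiff := IsSemiprimaryRing.isNoetherian_iff_isArtinian (R := R ⧸ I) (M := D)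
  constructor <;> intro hR
  · have := hiff.1 (isNoetherian_of_tower R hR)
    exact isArtinian_of_surjective_algebraMap (R := R ⧸ I) Ideal.Quotient.mk_surjective
  · have := hiff.2 (isArtinian_of_tower R hR)
    have := Module.Finite.trans (R := R) (R ⧸ I) D
    infer_instance

end ArtinianQuotient

section BigPrimes

lemma eq_of_le_of_mem_minimalPrimes {𝔞 p q : Ideal R} [p.IsPrime] (hp : 𝔞 ≤ p)
    (hq : q ∈ 𝔞.minimalPrimes) (hpq : p ≤ q) : p = q :=
  le_antisymm hpq (hq.2 ⟨‹_›, hp⟩ hpq)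

/-- The minimal primes of `𝔞` that are contained in infinitely many primes. When `R ⧸ 𝔞` has
dimension at most one, these are all the primes containing `𝔞` with that property. -/
def bigPrimes (𝔞 : Ideal R) : Set (Ideal R) :=
  {p ∈ 𝔞.minimalPrimes | (PrimeSpectrum.zeroLocus (p : Set R)).Infinite}

/-- The complement of the union of the `bigPrimes` of `𝔞`. -/
def bigPrimesCompl (𝔞 : Ideal R) : Submonoid R where
  carrier := {s | ∀ p ∈ bigPrimes 𝔞, s ∉ p}
  mul_mem' ha hb p hp h := (hp.1.1.1.mem_or_mem h).elim (ha p hp) (hb p hp)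
  one_mem' p hp h := hp.1.1.1.ne_top ((Ideal.eq_top_iff_one p).2 h)

variable {𝔞 p : Ideal R}

lemma mem_minimalPrimes_of_infinite_zeroLocus (hdim : ringKrullDim (R ⧸ 𝔞) ≤ 1) [hp : p.IsPrime]
    (hle : 𝔞 ≤ p) (hinf : (PrimeSpectrum.zeroLocus (p : Set R)).Infinite) :
    p ∈ 𝔞.minimalPrimes := by
  refine ⟨⟨hp, hle⟩, fun q hq hqp => ?_⟩
  by_contra hpq
  obtain ⟨m, hpm, hmp⟩ := (hinf.sdiff (Set.finite_singleton ⟨p, hp⟩)).nonempty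
  let s : LTSeries (PrimeSpectrum.zeroLocus (𝔞 : Set R)) :=
    { length := 2
      toFun := ![⟨⟨q, hq.1⟩, hq.2⟩, ⟨⟨p, hp⟩, hle⟩, ⟨m, hle.trans hpm⟩]
      step := fun i => by
        fin_cases i
        · exact lt_of_le_not_ge hqp hpq
        · exact lt_of_le_of_ne (show (⟨p, hp⟩ : PrimeSpectrum R) ≤ m from hpm) (Ne.symm hmp) }
  have hlen : ((2 : ℕ) : WithBot ℕ∞) ≤ 1 :=
    (Order.LTSeries.length_le_krullDim s).trans ((ringKrullDim_quotient 𝔞).symm.trans_le hdim)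
  norm_cast at hlen

lemma finite_zeroLocus_of_mem_bigPrimesCompl (hdim : ringKrullDim (R ⧸ 𝔞) ≤ 1) [p.IsPrime]
    (hle : 𝔞 ≤ p) {s : R} (hs : s ∈ bigPrimesCompl 𝔞) (hsp : s ∈ p) :
    (PrimeSpectrum.zeroLocus (p : Set R)).Finite := by
  by_contra hinf
  exact hs p ⟨mem_minimalPrimes_of_infinite_zeroLocus hdim hle hinf, hinf⟩ hsp

lemma exists_mem_bigPrimes_le_of_disjoint [IsNoetherianRing R] {I : Ideal R}
    (h : ∀ s ∈ bigPrimesCompl 𝔞, s ∉ I) : ∃ p ∈ bigPrimes 𝔞, I ≤ p := by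
  have hfin : (bigPrimes 𝔞).Finite :=
    𝔞.finite_minimalPrimes_of_isNoetherianRing.subset (Set.sep_subset _ _)
  refine (Ideal.subset_union_prime_finite hfin (f := id) ⊥ ⊥ fun p hp _ _ => hp.1.1.1).1 ?_
  intro x hx
  by_contra hbig
  exact h x (fun p hp hxp => hbig (Set.mem_biUnion hp hxp)) hx

end BigPrimes

section PrimeAnnihilator

variable {p : Ideal R}

lemma mem_associatedPrimes_quotient_self [hp : p.IsPrime] : p ∈ associatedPrimes R (R ⧸ p) := by
  refine ⟨hp, Ideal.Quotient.mk p 1, ?_⟩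
  ext x
  simp_rw [Ideal.mem_radical_iff, Submodule.mem_colon_singleton, Submodule.mem_bot,
    Algebra.smul_def, Ideal.Quotient.algebraMap_eq, ← map_mul, mul_one,
    Ideal.Quotient.eq_zero_iff_mem]
  exact ⟨fun hx => ⟨1, (pow_one x).symm ▸ hx⟩, fun ⟨n, hn⟩ => hp.mem_of_pow_mem n hn⟩

lemma not_isWeaklyLaskerian_finsupp_quotient
    (hinf : (PrimeSpectrum.zeroLocus (p : Set R)).Infinite) :
    ¬ IsWeaklyLaskerian R (ℕ →₀ R ⧸ p) := by
  intro h
  let m : ℕ ↪ PrimeSpectrum.zeroLocus (p : Set R) := hinf.natEmbedding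
  let M (j : ℕ) : Type u := R ⧸ (m j).1.asIdeal
  have hM : IsWeaklyLaskerian R (DirectSum ℕ M) :=
    (h.of_linearEquiv (finsuppLEquivDirectSum R (R ⧸ p) ℕ)).of_surjective
      (DirectSum.lmap fun j => (Submodule.factor (m j).2 : (R ⧸ p) →ₗ[R] M j))
      ((DirectSum.lmap_surjective _).2 fun j => Submodule.factor_surjective _)
  refine Set.infinite_of_injective_forall_mem (f := fun j => (m j).1.asIdeal)
    (fun i j hij => m.injective (Subtype.ext (PrimeSpectrum.ext hij))) (fun j => ?_)
    hM.associatedPrimes_finite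
  exact associatedPrimes.subset_of_injective (f := DirectSum.lof R ℕ M j)
    (DirectSum.of_injective j) (mem_associatedPrimes_quotient_self (p := (m j).1.asIdeal))

lemma exists_fg_forall_notMem_smul_mem [p.IsPrime]
    (hinf : (PrimeSpectrum.zeroLocus (p : Set R)).Infinite)
    {W : Type u} [AddCommGroup W] [Module R W] (hp : Module.IsTorsionBySet R W p)
    (hW : IsWeaklyLaskerian R W) :
    ∃ L : Submodule R W, L.FG ∧ ∀ w, ∃ r ∉ p, r • w ∈ L := by
  let _ := hp.module
  have : IsScalarTower R (R ⧸ p) W := hp.isScalarTower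
  obtain ⟨b, hb, hmax⟩ := exists_maximal_linearIndepOn (R ⧸ p) (id : W → W)
  have hfin : b.Finite := by
    by_contra hb_inf
    let e : ℕ ↪ b := Set.Infinite.natEmbedding b hb_inf
    have hind : LinearIndependent (R ⧸ p) fun i => (e i : W) :=
      LinearIndependent.comp hb e e.injective
    exact not_isWeaklyLaskerian_finsupp_quotient hinf
      (hW.of_injective ((Finsupp.linearCombination (R ⧸ p) _).restrictScalars R) hind)
  refine ⟨Submodule.span R b, Submodule.fg_span hfin, fun w => ?_⟩
  by_cases hw : w ∈ b
  · exact ⟨1, Ideal.one_notMem p, Submodule.smul_mem _ _ (Submodule.subset_span hw)⟩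
  · obtain ⟨a, ha, haw⟩ := hmax w hw
    obtain ⟨r, rfl⟩ := Ideal.Quotient.mk_surjective a
    refine ⟨r, fun hr => ha (Ideal.Quotient.eq_zero_iff_mem.2 hr), ?_⟩
    rw [← Submodule.restrictScalars_span R (R ⧸ p) Ideal.Quotient.mk_surjective]
    rwa [Set.image_id] at haw

end PrimeAnnihilator

section LocalizedFinite

open IsLocalizedModule

variable {S : Submonoid R} {W : Type u} [AddCommGroup W] [Module R W]

lemma localized_eq_top_iff {L : Submodule R W} :
    L.localized S = ⊤ ↔ ∀ w, ∃ s ∈ S, s • w ∈ L := by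
  refine ⟨fun h w => ?_, fun h => eq_top_iff.2 fun z _ => ?_⟩
  · obtain ⟨m, hm, s, hms⟩ : LocalizedModule.mkLinearMap S W w ∈ L.localized S :=
      h ▸ Submodule.mem_top
    rw [mk'_eq_iff, ← LinearMap.map_smul_of_tower] at hms
    obtain ⟨t, ht⟩ := (eq_iff_exists S (LocalizedModule.mkLinearMap S W)).1 hms
    refine ⟨t * s, mul_mem t.2 s.2, ?_⟩
    rw [mul_smul]
    exact (show (t : R) • m = _ from ht) ▸ L.smul_mem _ hm
  · obtain ⟨⟨w, s⟩, rfl⟩ := mk'_surjective S (LocalizedModule.mkLinearMap S W) z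
    obtain ⟨t, ht, hw⟩ := h w
    exact ⟨t • w, hw, ⟨t, ht⟩ * s, mk'_cancel_left _ w ⟨t, ht⟩ s⟩

lemma finite_localizedModule_iff :
    Module.Finite (Localization S) (LocalizedModule S W) ↔
      ∃ L : Submodule R W, L.FG ∧ ∀ w, ∃ s ∈ S, s • w ∈ L := by
  simp_rw [← localized_eq_top_iff]
  refine ⟨fun h => ?_, fun ⟨L, hL, htop⟩ => ⟨htop ▸ L.localized_fg S hL⟩⟩
  classical
  obtain ⟨e, he⟩ := h.fg_top
  choose x hx using surj S (LocalizedModule.mkLinearMap S W)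
  refine ⟨Submodule.span R (e.image fun z => (x z).1), ⟨_, rfl⟩, ?_⟩
  rw [eq_top_iff, ← he, Submodule.span_le]
  exact fun z hz => ⟨(x z).1, Submodule.subset_span (Finset.mem_image_of_mem _ hz), (x z).2,
    mk'_eq_iff.2 (hx z).symm⟩

lemma localized_torsionBy (a : R) :
    (Submodule.torsionBy R W a).localized S =
      Submodule.torsionBy (Localization S) (LocalizedModule S W)
        (algebraMap R (Localization S) a) := by
  ext z
  rw [Submodule.mem_torsionBy_iff, algebraMap_smul]
  constructor
  · rintro ⟨w, hw, s, rfl⟩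
    rw [← mk'_smul, (Submodule.mem_torsionBy_iff a w).1 hw, mk'_zero]
  · obtain ⟨⟨w, s⟩, rfl⟩ := mk'_surjective S (LocalizedModule.mkLinearMap S W) z
    intro hz
    rw [Function.uncurry_apply_pair, ← mk'_smul, mk'_eq_zero'] at hz
    obtain ⟨t, ht⟩ := hz
    exact ⟨t • w, (smul_comm a t w).trans ht, t * s, mk'_cancel_left _ w t s⟩

lemma torsionBySet_insert (a : R) (s : Set R) :
    Submodule.torsionBySet R W (insert a s) =
      Submodule.torsionBy R W a ⊓ Submodule.torsionBySet R W s := by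
  ext
  simp

lemma localized_torsionBySet (s : Finset R) :
    (Submodule.torsionBySet R W s).localized S =
      Submodule.torsionBySet (Localization S) (LocalizedModule S W)
        (algebraMap R (Localization S) '' s) := by
  classical
  induction s using Finset.induction with
  | empty =>
    have hA (A N : Type u) [CommRing A] [AddCommGroup N] [Module A N] :
        Submodule.torsionBySet A N ∅ = ⊤ := eq_top_iff.2 fun _ _ => by simp
    rw [Finset.coe_empty, Set.image_empty, hA, hA, Submodule.localized, Submodule.localized'_top]
  | insert a s _ ih =>
    rw [Finset.coe_insert, Set.image_insert_eq, torsionBySet_insert, torsionBySet_insert,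
      ← ih, ← localized_torsionBy]
    exact Submodule.localized'_inf ..

lemma localized_torsionBySet_ideal {I : Ideal R} (hI : I.FG) :
    (Submodule.torsionBySet R W I).localized S =
      Submodule.torsionBySet (Localization S) (LocalizedModule S W)
        (I.map (algebraMap R (Localization S))) := by
  obtain ⟨s, rfl⟩ := hI
  rw [Ideal.map_span, ← Submodule.torsionBySet_eq_torsionBySet_span,
    ← Submodule.torsionBySet_eq_torsionBySet_span, localized_torsionBySet]

end LocalizedFinite

section LocalizedWeaklyLaskerian

variable [IsNoetherianRing R] {𝔞 : Ideal R}

lemma exists_mem_bigPrimesCompl_mem_span_sup {p : Ideal R} (hp : p ∈ bigPrimes 𝔞) {r : R}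
    (hr : r ∉ p) : ∃ s ∈ bigPrimesCompl 𝔞, s ∈ Ideal.span {r} ⊔ p := by
  by_contra! hdisj
  obtain ⟨q, hq, hle⟩ := exists_mem_bigPrimes_le_of_disjoint hdisj
  have : p.IsPrime := hp.1.1.1
  have hpq : p = q := eq_of_le_of_mem_minimalPrimes hp.1.1.2 hq.1 (le_sup_right.trans hle)
  exact hr (hpq ▸ hle (Ideal.mem_sup_left (Ideal.mem_span_singleton_self r)))

lemma finite_localizedModule_of_isTorsionBySet_prime {p : Ideal R} [p.IsPrime]
    (hle : 𝔞 ≤ p) {W : Type u} [AddCommGroup W] [Module R W]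
    (hp : Module.IsTorsionBySet R W p) (hW : IsWeaklyLaskerian R W) :
    Module.Finite (Localization (bigPrimesCompl 𝔞)) (LocalizedModule (bigPrimesCompl 𝔞) W) := by
  rw [finite_localizedModule_iff]
  by_cases hdisj : ∃ s ∈ bigPrimesCompl 𝔞, s ∈ p
  · obtain ⟨s, hs, hsp⟩ := hdisj
    exact ⟨⊥, Submodule.fg_bot, fun w => ⟨s, hs, hp (a := ⟨s, hsp⟩)⟩⟩
  obtain ⟨q, hq, hpq⟩ := exists_mem_bigPrimes_le_of_disjoint fun s hs hsp => hdisj ⟨s, hs, hsp⟩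
  obtain rfl : p = q := eq_of_le_of_mem_minimalPrimes hle hq.1 hpq
  obtain ⟨L, hL, hLw⟩ := exists_fg_forall_notMem_smul_mem hq.2 hp hW
  refine ⟨L, hL, fun w => ?_⟩
  obtain ⟨r, hr, hrw⟩ := hLw w
  obtain ⟨s, hs, hsr⟩ := exists_mem_bigPrimesCompl_mem_span_sup hq hr
  obtain ⟨b, c, hc, rfl⟩ := Ideal.mem_span_singleton_sup.1 hsr
  refine ⟨_, hs, ?_⟩
  rw [add_smul, show c • w = 0 from hp (a := ⟨c, hc⟩), add_zero, mul_smul]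
  exact L.smul_mem b hrw

lemma finite_localizedModule_of_isWeaklyLaskerian
    {W : Type u} [AddCommGroup W] [Module R W] (htor : Module.IsTorsionBySet R W 𝔞)
    (hW : IsWeaklyLaskerian R W) :
    Module.Finite (Localization (bigPrimesCompl 𝔞)) (LocalizedModule (bigPrimesCompl 𝔞) W) := by
  let P (I : Ideal R) : Prop := 𝔞 ≤ I → ∀ (W : Type u) [AddCommGroup W] [Module R W],
    Module.IsTorsionBySet R W I → IsWeaklyLaskerian R W →
    Module.Finite (Localization (bigPrimesCompl 𝔞)) (LocalizedModule (bigPrimesCompl 𝔞) W)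
  have hoka : Ideal.IsOka P :=
    { top := fun _ W _ _ htor _ => finite_localizedModule_iff.2 ⟨⊥, Submodule.fg_bot, fun w =>
        ⟨1, one_mem _, htor (a := ⟨1, Submodule.mem_top⟩)⟩⟩
      oka := fun {I a} hsup hcolon hI W _ _ htor hW => by
        let K : Submodule R W := LinearMap.range (LinearMap.lsmul R W a)
        have hK : Module.IsTorsionBySet R K (I.colon (Ideal.span {a} : Set R)) := by
          rintro ⟨_, w, rfl⟩ ⟨r, hr⟩
          refine Subtype.ext ((smul_smul r a w).trans ?_)
          exact htor (a := ⟨r * a, Ideal.mem_colon_span_singleton.1 hr⟩)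
        have hQ : Module.IsTorsionBySet R (W ⧸ K) (I ⊔ Ideal.span {a} : Ideal R) := by
          refine (Module.isTorsionBySet_quotient_iff K _).2 fun w r hr => ?_
          rw [SetLike.mem_coe, sup_comm] at hr
          obtain ⟨b, c, hc, rfl⟩ := Ideal.mem_span_singleton_sup.1 hr
          rw [add_smul, show c • w = 0 from htor (a := ⟨c, hc⟩), add_zero, mul_comm, mul_smul]
          exact ⟨b • w, rfl⟩
        have := hsup (hI.trans le_sup_left) (W ⧸ K) hQ (hW.of_surjective _ K.mkQ_surjective)
        have := hcolon (hI.trans Ideal.le_colon) K hK (hW.of_injective _ K.injective_subtype)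
        exact Module.Finite.of_exact (f := LocalizedModule.map _ K.subtype)
          (g := LocalizedModule.map _ K.mkQ)
          (LocalizedModule.map_exact _ _ _ (LinearMap.exact_subtype_mkQ K))
          (LocalizedModule.map_surjective _ _ K.mkQ_surjective) }
  refine hoka.forall_of_forall_prime (fun I hI => exists_maximal_of_wellFoundedGT _ ⟨I, hI⟩)
    (fun p _ hle W _ _ htor hW => ?_) 𝔞 le_rfl W htor hW
  exact finite_localizedModule_of_isTorsionBySet_prime hle htor hW

end LocalizedWeaklyLaskerian

section LocalizedArtinian

open IsLocalizedModule
open scoped Pointwise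

variable [IsNoetherianRing R] {𝔞 : Ideal R}

lemma under_mem_bigPrimes {Q : Ideal (Localization (bigPrimesCompl 𝔞))} [hQ : Q.IsPrime]
    (hle : 𝔞.map (algebraMap R (Localization (bigPrimesCompl 𝔞))) ≤ Q) :
    Q.under R ∈ bigPrimes 𝔞 := by
  obtain ⟨q, hq, hQq⟩ := exists_mem_bigPrimes_le_of_disjoint fun s hs hsQ =>
    Set.disjoint_left.1 ((IsLocalization.disjoint_under_iff (bigPrimesCompl 𝔞) _ Q).2 hQ.ne_top)
      hs hsQ
  have hQ_eq : Q.under R = q :=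
    eq_of_le_of_mem_minimalPrimes (Ideal.map_le_iff_le_comap.1 hle) hq.1 hQq
  exact hQ_eq ▸ hq

lemma isMaximal_of_map_bigPrimesCompl_le {P : Ideal (Localization (bigPrimesCompl 𝔞))}
    [hP : P.IsPrime] (hle : 𝔞.map (algebraMap R (Localization (bigPrimesCompl 𝔞))) ≤ P) :
    P.IsMaximal := by
  obtain ⟨m, hm, hPm⟩ := Ideal.exists_le_maximal P hP.ne_top
  have hunder : P.under R = m.under R :=
    eq_of_le_of_mem_minimalPrimes (Ideal.map_le_iff_le_comap.1 hle)
      (under_mem_bigPrimes (hle.trans hPm)).1 (Ideal.comap_mono hPm)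
  exact (IsLocalization.orderEmbedding (bigPrimesCompl 𝔞) _).injective hunder ▸ hm

instance isArtinianRing_quotient_map_bigPrimesCompl_pow (k : ℕ) :
    IsArtinianRing (Localization (bigPrimesCompl 𝔞) ⧸
      𝔞.map (algebraMap R (Localization (bigPrimesCompl 𝔞))) ^ k) := by
  have := IsLocalization.isNoetherianRing (bigPrimesCompl 𝔞)
    (Localization (bigPrimesCompl 𝔞)) inferInstance
  refine isArtinianRing_quotient_of_forall_minimalPrimes_isMaximal fun p hp => ?_
  have : p.IsPrime := hp.1.1
  exact isMaximal_of_map_bigPrimesCompl_le (this.le_of_pow_le hp.1.2)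

variable {T : Type u} [AddCommGroup T] [Module R T]

lemma isArtinian_torsionBySet_map_of_isWeaklyLaskerian
    (hWL : IsWeaklyLaskerian R (Submodule.torsionBySet R T 𝔞)) :
    IsArtinian (Localization (bigPrimesCompl 𝔞))
      (Submodule.torsionBySet (Localization (bigPrimesCompl 𝔞))
        (LocalizedModule (bigPrimesCompl 𝔞) T)
        (𝔞.map (algebraMap R (Localization (bigPrimesCompl 𝔞))))) := by
  have := IsLocalization.isNoetherianRing (bigPrimesCompl 𝔞)
    (Localization (bigPrimesCompl 𝔞)) inferInstance
  have := finite_localizedModule_of_isWeaklyLaskerian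
    (Submodule.torsionBySet_isTorsionBySet (M := T) (𝔞 : Set R)) hWL
  have hfin := Module.Finite.equiv
    (Submodule.localizedEquiv (bigPrimesCompl 𝔞) (Submodule.torsionBySet R T 𝔞)).symm
  rw [localized_torsionBySet_ideal (IsNoetherian.noetherian 𝔞)] at hfin
  refine (isNoetherian_iff_isArtinian_of_isTorsionBySet
    (I := 𝔞.map (algebraMap R (Localization (bigPrimesCompl 𝔞))) ^ 1) ?_).1 inferInstance
  exact (pow_one (𝔞.map (algebraMap R (Localization (bigPrimesCompl 𝔞))))).symm ▸
    Submodule.torsionBySet_isTorsionBySet _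

lemma isArtinian_localizedModule_of_isWeaklyLaskerian (htor : 𝔞.primaryComponent T = ⊤)
    (hWL : IsWeaklyLaskerian R (Submodule.torsionBySet R T 𝔞)) :
    IsArtinian (Localization (bigPrimesCompl 𝔞)) (LocalizedModule (bigPrimesCompl 𝔞) T) := by
  classical
  obtain ⟨s, hs⟩ := IsNoetherian.noetherian 𝔞
  refine isArtinian_of_isArtinian_torsionBySet
    (s := s.image (algebraMap R (Localization (bigPrimesCompl 𝔞)))) (fun x hx z => ?_) ?_
  · obtain ⟨a, ha, rfl⟩ := Finset.mem_image.1 hx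
    obtain ⟨⟨t, u⟩, rfl⟩ := mk'_surjective (bigPrimesCompl 𝔞) (LocalizedModule.mkLinearMap _ T) z
    obtain ⟨k, hk⟩ := (Ideal.primaryComponent_mem T 𝔞 t).1 (htor ▸ Submodule.mem_top)
    have hak : a ^ k • t = 0 := (Submodule.mem_torsionBySet_iff _ _).1 hk
      ⟨a ^ k, Ideal.pow_mem_pow (hs ▸ Submodule.subset_span ha) k⟩
    refine ⟨k, ?_⟩
    rw [← map_pow, algebraMap_smul, Function.uncurry_apply_pair, ← mk'_smul, hak, mk'_zero]
  · rw [Finset.coe_image, Submodule.torsionBySet_eq_torsionBySet_span, ← Ideal.map_span,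
      show Ideal.span (s : Set R) = 𝔞 from hs]
    exact isArtinian_torsionBySet_map_of_isWeaklyLaskerian hWL

lemma finite_localizedModule_quotient_of_pow_smul_le
    [IsArtinian (Localization (bigPrimesCompl 𝔞)) (LocalizedModule (bigPrimesCompl 𝔞) T)] {x : R}
    {k : ℕ} (hk : 𝔞.map (algebraMap R (Localization (bigPrimesCompl 𝔞))) ^ k •
      (⊤ : Submodule (Localization (bigPrimesCompl 𝔞)) (LocalizedModule (bigPrimesCompl 𝔞) T)) ≤
        algebraMap R (Localization (bigPrimesCompl 𝔞)) x • ⊤) :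
    Module.Finite (Localization (bigPrimesCompl 𝔞))
      (LocalizedModule (bigPrimesCompl 𝔞) (T ⧸ LinearMap.range (LinearMap.lsmul R T x))) := by
  have := IsLocalization.isNoetherianRing (bigPrimesCompl 𝔞)
    (Localization (bigPrimesCompl 𝔞)) inferInstance
  let K := LinearMap.range (LinearMap.lsmul R T x)
  let π := LocalizedModule.map (bigPrimesCompl 𝔞) K.mkQ
  have hπ : Function.Surjective π := LocalizedModule.map_surjective _ _ K.mkQ_surjective
  have hx (w : LocalizedModule (bigPrimesCompl 𝔞) (T ⧸ K)) : x • w = 0 := by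
    obtain ⟨⟨v, s⟩, rfl⟩ := mk'_surjective (bigPrimesCompl 𝔞) (LocalizedModule.mkLinearMap _ _) w
    obtain ⟨t, rfl⟩ := K.mkQ_surjective v
    have hxt : x • K.mkQ t = 0 := (Submodule.Quotient.mk_eq_zero K).2 ⟨t, rfl⟩
    rw [Function.uncurry_apply_pair, ← mk'_smul, hxt, mk'_zero]
  have hann : Module.IsTorsionBySet (Localization (bigPrimesCompl 𝔞))
      (LocalizedModule (bigPrimesCompl 𝔞) (T ⧸ K))
      (𝔞.map (algebraMap R (Localization (bigPrimesCompl 𝔞))) ^ k : Ideal _) := by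
    intro w b
    obtain ⟨z, rfl⟩ := hπ w
    obtain ⟨y, -, hy⟩ := hk (Submodule.smul_mem_smul b.2 (Submodule.mem_top (x := z)))
    rw [← map_smul, ← hy]
    exact (map_smul π _ y).trans ((algebraMap_smul _ x (π y)).trans (hx _))
  have := (isNoetherian_iff_isArtinian_of_isTorsionBySet hann).2 (isArtinian_of_surjective _ π hπ)
  infer_instance

lemma exists_mem_notMem_finite_localizedModule (htor : 𝔞.primaryComponent T = ⊤)
    (hWL : IsWeaklyLaskerian R (Submodule.torsionBySet R T 𝔞)) {J : Ideal R} (hJ : ¬ 𝔞 ≤ J) :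
    ∃ x ∈ 𝔞, x ∉ J ∧ Module.Finite (Localization (bigPrimesCompl 𝔞))
      (LocalizedModule (bigPrimesCompl 𝔞) (T ⧸ LinearMap.range (LinearMap.lsmul R T x))) := by
  have := IsLocalization.isNoetherianRing (bigPrimesCompl 𝔞)
    (Localization (bigPrimesCompl 𝔞)) inferInstance
  have := isArtinian_localizedModule_of_isWeaklyLaskerian htor hWL
  obtain ⟨F, hF, hFprime, hFx⟩ := exists_finite_primes_forall_pow_smul_le
    (LocalizedModule (bigPrimesCompl 𝔞) T)
    (𝔞.map (algebraMap R (Localization (bigPrimesCompl 𝔞))))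
  let G : Set (Ideal R) := insert J ((Ideal.under R) '' F)
  have hG : ¬ (𝔞 : Set R) ⊆ ⋃ q ∈ G, q := by
    intro hsub
    have hGprime : ∀ q ∈ G, q ≠ J → q ≠ J → q.IsPrime := by
      rintro _ (rfl | ⟨q, hq, rfl⟩) hne _
      exacts [absurd rfl hne, (hFprime q hq).1.comap _]
    obtain ⟨_, rfl | ⟨q, hq, rfl⟩, hle⟩ := (Ideal.subset_union_prime_finite
      ((hF.image _).insert J) (f := id) J J hGprime).1 hsub
    exacts [hJ hle, (hFprime q hq).2 (Ideal.map_le_iff_le_comap.2 hle)]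
  obtain ⟨x, hx, hxG⟩ := Set.not_subset.1 hG
  obtain ⟨k, hk⟩ := hFx (algebraMap R _ x) fun q hq hxq =>
    hxG (Set.mem_biUnion (Set.mem_insert_of_mem _ ⟨q, hq, rfl⟩) hxq)
  exact ⟨x, hx, fun hxJ => hxG (Set.mem_biUnion (Set.mem_insert _ _) hxJ),
    finite_localizedModule_quotient_of_pow_smul_le hk⟩

end LocalizedArtinian

section PrimaryComponentEqTop

variable {𝔞 : Ideal R} {Q : Type u} [AddCommGroup Q] [Module R Q]

lemma support_subset_zeroLocus_of_primaryComponent_eq_top (htor : 𝔞.primaryComponent Q = ⊤) :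
    Module.support R Q ⊆ PrimeSpectrum.zeroLocus (𝔞 : Set R) := by
  intro p hp
  obtain ⟨w, hw⟩ := Module.mem_support_iff_exists_annihilator.1 hp
  obtain ⟨t, ht⟩ := (Ideal.primaryComponent_mem Q 𝔞 w).1 (htor ▸ Submodule.mem_top)
  refine p.2.le_of_pow_le (n := t) (le_trans (fun a ha => ?_) hw)
  exact (Submodule.mem_annihilator_span_singleton _ _).2
    ((Submodule.mem_torsionBySet_iff _ _).1 ht ⟨a, ha⟩)

variable [IsNoetherianRing R]

lemma exists_associatedPrimes_le_of_mem_support {q : PrimeSpectrum R}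
    (hq : q ∈ Module.support R Q) : ∃ p ∈ associatedPrimes R Q, p ≤ q.asIdeal := by
  obtain ⟨w, hw⟩ := Module.mem_support_iff_exists_annihilator.1 hq
  obtain ⟨p, hp, hpq⟩ := Ideal.exists_minimalPrimes_le hw
  refine ⟨p, associatedPrimes.subset_of_injective (Submodule.span R {w}).injective_subtype ?_, hpq⟩
  exact Module.associatedPrimes.minimalPrimes_annihilator_subset_associatedPrimes R _ hp

lemma finite_support_of_finite_zeroLocus (hass : (associatedPrimes R Q).Finite)
    (hfin : ∀ p ∈ associatedPrimes R Q, (PrimeSpectrum.zeroLocus (p : Set R)).Finite) :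
    (Module.support R Q).Finite := by
  refine (hass.biUnion hfin).subset fun q hq => ?_
  obtain ⟨p, hp, hpq⟩ := exists_associatedPrimes_le_of_mem_support hq
  exact Set.mem_biUnion hp hpq

lemma le_of_mem_associatedPrimes (htor : 𝔞.primaryComponent Q = ⊤) {p : Ideal R}
    (hp : p ∈ associatedPrimes R Q) : 𝔞 ≤ p := by
  obtain ⟨hprime, v, hv⟩ := isAssociatedPrime_iff.1 hp
  have hsupp : (⟨p, hprime⟩ : PrimeSpectrum R) ∈ Module.support R Q :=
    Module.mem_support_iff_exists_annihilator.2 ⟨v, fun r hr => hv ▸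
      Submodule.mem_colon_singleton.2 ((Submodule.mem_annihilator_span_singleton _ _).1 hr)⟩
  exact support_subset_zeroLocus_of_primaryComponent_eq_top htor hsupp

lemma mem_associatedPrimes_torsionBySet {p : Ideal R} (hp : p ∈ associatedPrimes R Q)
    (hle : 𝔞 ≤ p) : p ∈ associatedPrimes R (Submodule.torsionBySet R Q (𝔞 : Set R)) := by
  obtain ⟨hprime, v, rfl⟩ := isAssociatedPrime_iff.1 hp
  refine isAssociatedPrime_iff.2 ⟨hprime, ⟨v, ?_⟩, ?_⟩
  · exact (Submodule.mem_torsionBySet_iff _ _).2 fun a => Submodule.mem_colon_singleton.1 (hle a.2)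
  · ext r
    simp [Submodule.mem_colon_singleton]

lemma isWeaklyLaskerian_of_forall_exists_smul_eq_zero (hdim : ringKrullDim (R ⧸ 𝔞) ≤ 1)
    (htor : 𝔞.primaryComponent Q = ⊤)
    (hWL : IsWeaklyLaskerian R (Submodule.torsionBySet R Q (𝔞 : Set R)))
    (hQ : ∀ w : Q, ∃ s ∈ bigPrimesCompl 𝔞, s • w = 0) : IsWeaklyLaskerian R Q := by
  refine .of_finite_support (finite_support_of_finite_zeroLocus
    (hWL.associatedPrimes_finite.subset fun p hp => mem_associatedPrimes_torsionBySet hp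
      (le_of_mem_associatedPrimes htor hp)) fun p hp => ?_)
  have hle := le_of_mem_associatedPrimes htor hp
  obtain ⟨hprime, v, rfl⟩ := isAssociatedPrime_iff.1 hp
  obtain ⟨s, hs, hsv⟩ := hQ v
  exact finite_zeroLocus_of_mem_bigPrimesCompl hdim hle hs (Submodule.mem_colon_singleton.2 hsv)

lemma isWeaklyLaskerian_of_finite_localizedModule (hdim : ringKrullDim (R ⧸ 𝔞) ≤ 1)
    (htor : 𝔞.primaryComponent Q = ⊤) (hWL : IsWeaklyLaskerian R (ExtGroup R (R ⧸ 𝔞) Q 0))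
    (hfin : Module.Finite (Localization (bigPrimesCompl 𝔞))
      (LocalizedModule (bigPrimesCompl 𝔞) Q)) : IsWeaklyLaskerian R Q := by
  obtain ⟨L, hL, hLQ⟩ := finite_localizedModule_iff.1 hfin
  have : Module.Finite R L := Module.Finite.iff_fg.2 hL
  have hquot : IsWeaklyLaskerian R (ExtGroup R (R ⧸ 𝔞) (Q ⧸ L) 0) :=
    ExtGroup.isWeaklyLaskerian_right _ L.injective_subtype (LinearMap.exact_subtype_mkQ L)
      L.mkQ_surjective hWL (IsWeaklyLaskerian.of_finite.ext _ 1)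
  refine .of_submodule_of_quotient L .of_finite
    (isWeaklyLaskerian_of_forall_exists_smul_eq_zero hdim
      (primaryComponent_eq_top_of_surjective L.mkQ_surjective htor)
      (hquot.of_linearEquiv (ExtGroup.zeroEquiv 𝔞 _)) fun w => ?_)
  obtain ⟨v, rfl⟩ := L.mkQ_surjective w
  obtain ⟨s, hs, hsv⟩ := hLQ v
  exact ⟨s, hs, (Submodule.Quotient.mk_eq_zero L).2 hsv⟩

end PrimaryComponentEqTop

section TorsionModule

variable {T : Type u} [AddCommGroup T] [Module R T]

lemma exact_subtype_ker_rangeRestrict {B : Type u} [AddCommGroup B] [Module R B] (f : T →ₗ[R] B) :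
    Function.Exact (LinearMap.ker f).subtype f.rangeRestrict :=
  LinearMap.exact_iff.2 <| by rw [LinearMap.ker_rangeRestrict, Submodule.range_subtype]

namespace ExtGroup

variable {N : Type u} [AddCommGroup N] [Module R N]

lemma isWeaklyLaskerian_one_ker (h0 : IsWeaklyLaskerian R (ExtGroup R N T 0))
    (h1 : IsWeaklyLaskerian R (ExtGroup R N T 1)) (f : T →ₗ[R] T) :
    IsWeaklyLaskerian R (ExtGroup R N (LinearMap.ker f) 1) :=
  isWeaklyLaskerian_left N (Submodule.injective_subtype _) (exact_subtype_ker_rangeRestrict f)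
    f.surjective_rangeRestrict
    (isWeaklyLaskerian_zero_of_injective N (LinearMap.range f).injective_subtype h0) h1

lemma isWeaklyLaskerian_zero_quotient_range (h0 : IsWeaklyLaskerian R (ExtGroup R N T 0))
    (h1 : IsWeaklyLaskerian R (ExtGroup R N T 1)) {f : T →ₗ[R] T}
    (hker : IsWeaklyLaskerian R (ExtGroup R N (LinearMap.ker f) 2)) :
    IsWeaklyLaskerian R (ExtGroup R N (T ⧸ LinearMap.range f) 0) := by
  refine isWeaklyLaskerian_right N (Submodule.injective_subtype _)
    (LinearMap.exact_subtype_mkQ _) (Submodule.mkQ_surjective _) h0 ?_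
  exact isWeaklyLaskerian_right N (Submodule.injective_subtype _)
    (exact_subtype_ker_rangeRestrict f) f.surjective_rangeRestrict h1 hker

-- Multiplication by `x` factors through `xT` and vanishes on `Ext(N, T)`, so the image of
-- `Ext^{j+1}(N, T)` in `Ext^{j+1}(N, xT)` comes from `Ext^j(N, T/xT)`.
lemma isWeaklyLaskerian_succ_of_mem_annihilator {x : R} (hx : x ∈ Module.annihilator R N) {j : ℕ}
    (hK : IsWeaklyLaskerian R
      (ExtGroup R N (LinearMap.ker (LinearMap.lsmul R T x)) (j + 1)))
    (hV : IsWeaklyLaskerian R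
      (ExtGroup R N (T ⧸ LinearMap.range (LinearMap.lsmul R T x)) j)) :
    IsWeaklyLaskerian R (ExtGroup R N T (j + 1)) := by
  let m := LinearMap.lsmul R T x
  let δ := δ N (LinearMap.range m).injective_subtype
    (LinearMap.exact_subtype_mkQ _) (LinearMap.range m).mkQ_surjective j
  have hrange (e : ExtGroup R N T (j + 1)) :
      map N m.rangeRestrict (j + 1) e ∈ LinearMap.range δ := by
    refine (exact_δ_map N _ _ _ j _).1 ?_
    rw [← map_comp]
    exact (map_smul_id N x _ e).trans (smul_eq_zero hx e)
  have hexact : Function.Exact (map N (LinearMap.ker m).subtype (j + 1))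
      ((map N m.rangeRestrict (j + 1)).codRestrict _ hrange) := fun e =>
    Subtype.ext_iff.trans (exact_map_map N (LinearMap.ker m).injective_subtype
      (exact_subtype_ker_rangeRestrict m) m.surjective_rangeRestrict (j + 1) e)
  exact .of_exact hexact hK (hV.of_surjective δ.rangeRestrict δ.surjective_rangeRestrict)

end ExtGroup

variable [IsNoetherianRing R] {𝔞 : Ideal R}

theorem isWeaklyLaskerian_ext_of_primaryComponent_eq_top (hdim : ringKrullDim (R ⧸ 𝔞) ≤ 1)
    (htor : 𝔞.primaryComponent T = ⊤) (h0 : IsWeaklyLaskerian R (ExtGroup R (R ⧸ 𝔞) T 0))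
    (h1 : IsWeaklyLaskerian R (ExtGroup R (R ⧸ 𝔞) T 1)) (j : ℕ) :
    IsWeaklyLaskerian R (ExtGroup R (R ⧸ 𝔞) T j) := by
  induction hI : Module.annihilator R T using WellFoundedGT.induction generalizing T j with
  | ind I ih =>
  by_cases hle : 𝔞 ≤ Module.annihilator R T
  · have htop : Submodule.torsionBySet R T (𝔞 : Set R) = ⊤ :=
      (Module.isTorsionBySet_iff_torsionBySet_eq_top _).1 fun t a =>
        Module.mem_annihilator.1 (hle a.2) t
    have hT : IsWeaklyLaskerian R T :=
      h0.of_linearEquiv (ExtGroup.zeroEquiv 𝔞 T ≪≫ₗ LinearEquiv.ofTop _ htop)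
    exact hT.ext _ j
  obtain ⟨x, hx, hxT, hfin⟩ := exists_mem_notMem_finite_localizedModule htor
    (h0.of_linearEquiv (ExtGroup.zeroEquiv 𝔞 T)) hle
  let m : T →ₗ[R] T := LinearMap.lsmul R T x
  let K := LinearMap.ker m
  have hK (i : ℕ) : IsWeaklyLaskerian R (ExtGroup R (R ⧸ 𝔞) K i) := by
    have hlt : Module.annihilator R T < Module.annihilator R K := by
      refine lt_of_le_of_ne (LinearMap.annihilator_le_of_injective _ K.injective_subtype)
        fun h => hxT (h ▸ Module.mem_annihilator.2 fun y => Subtype.ext y.2)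
    exact ih _ (hI ▸ hlt) (primaryComponent_eq_top_of_injective K.injective_subtype htor)
      (ExtGroup.isWeaklyLaskerian_zero_of_injective _ K.injective_subtype h0)
      (ExtGroup.isWeaklyLaskerian_one_ker h0 h1 m) i rfl
  have hV : IsWeaklyLaskerian R (T ⧸ LinearMap.range m) :=
    isWeaklyLaskerian_of_finite_localizedModule hdim
      (primaryComponent_eq_top_of_surjective (Submodule.mkQ_surjective _) htor)
      (ExtGroup.isWeaklyLaskerian_zero_quotient_range h0 h1 (hK 2)) hfin
  cases j with
  | zero => exact h0
  | succ j =>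
    exact ExtGroup.isWeaklyLaskerian_succ_of_mem_annihilator
      (by rwa [Ideal.annihilator_quotient]) (hK (j + 1)) (hV.ext _ j)

end TorsionModule

section DimensionShift

variable [IsNoetherianRing R] {𝔞 : Ideal R} (A : Type u) [AddCommGroup A] [Module R A]

lemma ExtGroup.subsingleton_zero_quotient_primaryComponent (𝔞 : Ideal R) :
    Subsingleton (ExtGroup R (R ⧸ 𝔞) (A ⧸ 𝔞.primaryComponent A) 0) := by
  obtain ⟨E, _, _, f, _, hE, hf⟩ := exists_injective_embedding_quotient_primaryComponent 𝔞 A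
  have := ExtGroup.subsingleton_quotient_of_primaryComponent_eq_bot hE 0
  exact (ExtGroup.map_zero_injective _ hf).subsingleton

lemma exists_ext_equiv_succ_and_localExt_equiv_succ (𝔞 : Ideal R) :
    ∃ (N : Type u) (_ : AddCommGroup N) (_ : Module R N), ∀ i,
      Nonempty (ExtGroup R (R ⧸ 𝔞) N i ≃ₗ[R]
        ExtGroup R (R ⧸ 𝔞) (A ⧸ 𝔞.primaryComponent A) (i + 1)) ∧
      Nonempty (LocalExt 𝔞 N i ≃ₗ[R] LocalExt 𝔞 A (i + 1)) := by
  obtain ⟨E, _, _, f, _, hE, hf⟩ := exists_injective_embedding_quotient_primaryComponent 𝔞 A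
  have := ExtGroup.subsingleton_quotient_of_primaryComponent_eq_bot hE
  have := LocalExt.subsingleton_of_primaryComponent_eq_bot hE
  refine ⟨E ⧸ LinearMap.range f, inferInstance, inferInstance, fun i => ⟨⟨?_⟩, ⟨?_⟩⟩⟩
  · exact ExtGroup.δEquiv _ hf (LinearMap.exact_map_mkQ_range f) (Submodule.mkQ_surjective _) i
  · exact LocalExt.δEquiv 𝔞 hf (LinearMap.exact_map_mkQ_range f) (Submodule.mkQ_surjective _) i
      ≪≫ₗ (LocalExt.equivOfTorsionKer (Submodule.injective_subtype _)
        (LinearMap.exact_subtype_mkQ _) (Submodule.mkQ_surjective _)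
        (primaryComponent_primaryComponent 𝔞) i).symm

variable {A}

lemma isWeaklyLaskerian_ext_primaryComponent (hdim : ringKrullDim (R ⧸ 𝔞) ≤ 1)
    (h : Nontrivial (LocalExt 𝔞 A 0) → IsWeaklyLaskerian R (ExtGroup R (R ⧸ 𝔞) A 0) ∧
      IsWeaklyLaskerian R (ExtGroup R (R ⧸ 𝔞) A 1)) (j : ℕ) :
    IsWeaklyLaskerian R (ExtGroup R (R ⧸ 𝔞) (𝔞.primaryComponent A) j) := by
  rcases subsingleton_or_nontrivial (𝔞.primaryComponent A) with hA | hA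
  · exact IsWeaklyLaskerian.of_subsingleton.ext _ j
  obtain ⟨h0, h1⟩ := h (LocalExt.toPrimaryComponent_bijective 𝔞 A).2.nontrivial
  refine isWeaklyLaskerian_ext_of_primaryComponent_eq_top hdim
    (primaryComponent_primaryComponent 𝔞) ?_ ?_ j
  · exact ExtGroup.isWeaklyLaskerian_zero_of_injective _ (Submodule.injective_subtype _) h0
  · have := ExtGroup.subsingleton_zero_quotient_primaryComponent A 𝔞
    exact ExtGroup.isWeaklyLaskerian_left _ (Submodule.injective_subtype _)
      (LinearMap.exact_subtype_mkQ _) (Submodule.mkQ_surjective _) .of_subsingleton h1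

theorem isWeaklyLaskerian_ext_localExt_and_ext (hdim : ringKrullDim (R ⧸ 𝔞) ≤ 1)
    (h : ∀ i, Nontrivial (LocalExt 𝔞 A i) → IsWeaklyLaskerian R (ExtGroup R (R ⧸ 𝔞) A i) ∧
      IsWeaklyLaskerian R (ExtGroup R (R ⧸ 𝔞) A (i + 1))) (i : ℕ) :
    (∀ j, IsWeaklyLaskerian R (ExtGroup R (R ⧸ 𝔞) (LocalExt 𝔞 A i) j)) ∧
      IsWeaklyLaskerian R (ExtGroup R (R ⧸ 𝔞) A i) := by
  induction i generalizing A with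
  | zero =>
    have hT := isWeaklyLaskerian_ext_primaryComponent hdim (h 0)
    have := ExtGroup.subsingleton_zero_quotient_primaryComponent A 𝔞
    let e := LinearEquiv.ofBijective _ (LocalExt.toPrimaryComponent_bijective 𝔞 A)
    exact ⟨fun j => (hT j).of_linearEquiv (ExtGroup.mapEquiv _ e.symm j),
      ExtGroup.isWeaklyLaskerian_middle _ (Submodule.injective_subtype _)
        (LinearMap.exact_subtype_mkQ _) (Submodule.mkQ_surjective _) (hT 0) .of_subsingleton⟩
  | succ i ih =>
    have hT := isWeaklyLaskerian_ext_primaryComponent hdim (h 0)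
    obtain ⟨N, _, _, hN⟩ := exists_ext_equiv_succ_and_localExt_equiv_succ A 𝔞
    choose eExt eLoc using hN
    have hext (k : ℕ) (hk : IsWeaklyLaskerian R (ExtGroup R (R ⧸ 𝔞) A (k + 1))) :
        IsWeaklyLaskerian R (ExtGroup R (R ⧸ 𝔞) N k) :=
      (ExtGroup.isWeaklyLaskerian_right _ (Submodule.injective_subtype _)
        (LinearMap.exact_subtype_mkQ _) (Submodule.mkQ_surjective _) hk
        (hT (k + 2))).of_linearEquiv (eExt k).some.symm
    obtain ⟨hloc, hNi⟩ := ih (A := N) fun k hk =>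
      have hk' := h (k + 1) (eLoc k).some.symm.surjective.nontrivial
      ⟨hext k hk'.1, hext (k + 1) hk'.2⟩
    exact ⟨fun j => (hloc j).of_linearEquiv (ExtGroup.mapEquiv _ (eLoc i).some j),
      ExtGroup.isWeaklyLaskerian_middle _ (Submodule.injective_subtype _)
        (LinearMap.exact_subtype_mkQ _) (Submodule.mkQ_surjective _) (hT (i + 1))
        (hNi.of_linearEquiv (eExt i).some)⟩

end DimensionShift

variable (R)

theorem stmt13_general [IsNoetherianRing R] (𝔞 : Ideal R) (M : ModuleCat.{u} R)
    (hdim : ringKrullDim (R ⧸ 𝔞) ≤ 1)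
    (h : ∀ i : ℕ, Nontrivial ((localCohomology 𝔞 i).obj M) →
      IsWeaklyLaskerian R (extModule R i (ModuleCat.of R (R ⧸ 𝔞)) M) ∧
        IsWeaklyLaskerian R (extModule R (i + 1) (ModuleCat.of R (R ⧸ 𝔞)) M)) :
    (∀ i : ℕ, IsWeaklyCofinite R 𝔞 ((localCohomology 𝔞 i).obj M)) ∧
      ∀ i : ℕ, IsWeaklyLaskerian R (extModule R i (ModuleCat.of R (R ⧸ 𝔞)) M) := by
  have key := isWeaklyLaskerian_ext_localExt_and_ext (A := M) hdim fun i hi =>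
    have hLaskerian := h i (localExtEquivLocalCohomology 𝔞 i M).symm.surjective.nontrivial
    ⟨hLaskerian.1.of_linearEquiv (extModuleEquiv _ M i),
      hLaskerian.2.of_linearEquiv (extModuleEquiv _ M (i + 1))⟩
  refine ⟨fun i => ⟨?_, fun j => ?_⟩, fun i => (key i).2.of_linearEquiv (extModuleEquiv _ M i).symm⟩
  · exact support_subset_zeroLocus_of_primaryComponent_eq_top
      (primaryComponent_eq_top_of_surjective (localExtEquivLocalCohomology 𝔞 i M).surjective
        (LocalExt.primaryComponent_eq_top 𝔞 M i))
  · exact (((key i).1 j).of_linearEquiv (ExtGroup.mapEquiv _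
      (localExtEquivLocalCohomology 𝔞 i M) j)).of_linearEquiv (extModuleEquiv _ _ j).symm

theorem stmt13 [IsNoetherianRing R] (𝔞 : Ideal R) (M : ModuleCat.{u} R)
    (hdim : ringKrullDim (R ⧸ 𝔞) = 1)
    (h : ∀ i : ℕ, (i : ℕ∞) ≤ cohomologicalDim R 𝔞 M + 1 →
      IsWeaklyLaskerian R (extModule R i (ModuleCat.of R (R ⧸ 𝔞)) M)) :
    (∀ i : ℕ, IsWeaklyCofinite R 𝔞 ((localCohomology 𝔞 i).obj M)) ∧
      ∀ i : ℕ, IsWeaklyLaskerian R (extModule R i (ModuleCat.of R (R ⧸ 𝔞)) M) := by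
  refine stmt13_general R 𝔞 M hdim.le fun i hi => ?_
  have hcd : (i : ℕ∞) ≤ cohomologicalDim R 𝔞 M :=
    le_iSup₂ (f := fun (k : ℕ) (_ : k ∈ {k | Nontrivial ((localCohomology 𝔞 k).obj M)}) =>
      (k : ℕ∞)) i hi
  exact ⟨h i (hcd.trans le_self_add), h (i + 1) (by push_cast; gcongr)⟩
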